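/- arXiv:1309.6666 — 9 statements merged into one kernel-verified Lean document; each statement's English description precedes it below -/
import Mathlib

section
/- Let λ > 0 and let f, g : ℝ → ℝ be λ-periodic functions that are piecewise constant with two layers: f(ŷ) = f_A, g(ŷ) = g_A for ŷ ∈ [0, λ/2) and f(ŷ) = f_B, g(ŷ) = g_B for ŷ ∈ [λ/2, λ), for real constants f_A, f_B, g_A, g_B. Then ⟨f·⟦g⟧⟩ = 0. -/
open MeasureTheory

/-- `IsBracket lam a F` says that `F` is the function `⟦a⟧`: the unique continuous
`lam`-periodic function with zero mean whose derivative (in the integrated sense) is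
`a − ⟨a⟩`, i.e. `F(ŷ) = F(0) + ∫₀^ŷ (a(ξ) − ⟨a⟩) dξ` for all `ŷ`. -/
def IsBracket (lam : ℝ) (a F : ℝ → ℝ) : Prop :=
  Continuous F ∧ (∀ y, F (y + lam) = F y) ∧
  (1 / lam) * (∫ y in (0:ℝ)..lam, F y) = 0 ∧
  ∀ yh : ℝ, F yh = F 0 + ∫ ξ in (0:ℝ)..yh,
    (a ξ - (1 / lam) * ∫ s in (0:ℝ)..lam, a s)

/-- A function equal to the constant `c` on `[a, b)` is interval integrable against any
continuous weight. -/
theorem intervalIntegrable_mul_of_eq_const_Ico {h F : ℝ → ℝ} {a b c : ℝ} (hab : a ≤ b)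
    (hh : ∀ y ∈ Set.Ico a b, h y = c) (hF : Continuous F) :
    IntervalIntegrable (fun y => h y * F y) volume a b := by
  refine ((hF.intervalIntegrable a b).const_mul c).congr_uIoo fun y hy => ?_
  rw [Set.uIoo_of_le hab] at hy
  simp only [hh y ⟨hy.1.le, hy.2⟩]

theorem integral_mul_of_eq_const_Ico {h : ℝ → ℝ} (F : ℝ → ℝ) {a b c : ℝ} (hab : a ≤ b)
    (hh : ∀ y ∈ Set.Ico a b, h y = c) :
    ∫ y in a..b, h y * F y = c * ∫ y in a..b, F y := by
  rw [← intervalIntegral.integral_const_mul]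
  refine intervalIntegral.integral_congr_Ioo_of_le hab fun y hy => ?_
  simp only [hh y ⟨hy.1.le, hy.2⟩]

/-- The integral over a period of a two-layer function against a continuous weight. -/
theorem integral_two_layer_mul {lam : ℝ} (hlam : 0 < lam) {h F : ℝ → ℝ} {hA hB : ℝ}
    (h_left : ∀ y ∈ Set.Ico (0:ℝ) (lam / 2), h y = hA)
    (h_right : ∀ y ∈ Set.Ico (lam / 2) lam, h y = hB) (hF : Continuous F) :
    ∫ y in (0:ℝ)..lam, h y * F y =
      hA * (∫ y in (0:ℝ)..(lam / 2), F y) + hB * ∫ y in (lam / 2)..lam, F y := by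
  have h₁ : 0 ≤ lam / 2 := by linarith
  have h₂ : lam / 2 ≤ lam := by linarith
  rw [← intervalIntegral.integral_add_adjacent_intervals
      (intervalIntegrable_mul_of_eq_const_Ico h₁ h_left hF)
      (intervalIntegrable_mul_of_eq_const_Ico h₂ h_right hF),
    integral_mul_of_eq_const_Ico F h₁ h_left, integral_mul_of_eq_const_Ico F h₂ h_right]

/-- The bracket of a two-layer function is symmetric about the midpoint of the period. -/
theorem IsBracket.apply_sub_of_two_layer {lam : ℝ} (hlam : 0 < lam) {g G : ℝ → ℝ} {gA gB : ℝ}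
    (hgA : ∀ y ∈ Set.Ico (0:ℝ) (lam / 2), g y = gA)
    (hgB : ∀ y ∈ Set.Ico (lam / 2) lam, g y = gB) (hG : IsBracket lam g G)
    {y : ℝ} (hy : y ∈ Set.Icc 0 (lam / 2)) : G (lam - y) = G y := by
  obtain ⟨-, -, -, hint⟩ := hG
  obtain ⟨hy₀, hy₁⟩ := hy
  have hmean : (1 / lam) * (∫ s in (0:ℝ)..lam, g s) = (gA + gB) / 2 := by
    have := integral_two_layer_mul hlam hgA hgB (F := fun _ => 1) continuous_const
    simp only [mul_one, intervalIntegral.integral_const, smul_eq_mul] at this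
    rw [this]
    field_simp
    ring
  rw [hmean] at hint
  set k : ℝ → ℝ := fun ξ => g ξ - (gA + gB) / 2 with hk
  have hkA : ∀ ξ ∈ Set.Ico (0:ℝ) (lam / 2), k ξ = (gA - gB) / 2 := fun ξ hξ => by
    simp only [hk, hgA ξ hξ]; ring
  have hkB : ∀ ξ ∈ Set.Ico (lam / 2) lam, k ξ = (gB - gA) / 2 := fun ξ hξ => by
    simp only [hk, hgB ξ hξ]; ring
  have hk_right : ∀ ξ ∈ Set.Ico (lam / 2) (lam - y), k ξ = (gB - gA) / 2 := fun ξ hξ =>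
    hkB ξ ⟨hξ.1, by linarith [hξ.2]⟩
  have hk_left : ∀ ξ ∈ Set.Ico (0:ℝ) y, k ξ = (gA - gB) / 2 := fun ξ hξ =>
    hkA ξ ⟨hξ.1, by linarith [hξ.2]⟩
  have one_cont : Continuous fun _ : ℝ => (1 : ℝ) := continuous_const
  have h₁ : 0 ≤ lam / 2 := by linarith
  have h₂ : lam / 2 ≤ lam - y := by linarith
  have i₁ := intervalIntegrable_mul_of_eq_const_Ico h₁ hkA one_cont
  have i₂ := intervalIntegrable_mul_of_eq_const_Ico h₂ hk_right one_cont
  have e₀ := integral_mul_of_eq_const_Ico (fun _ => 1) hy₀ hk_left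
  have e₁ := integral_mul_of_eq_const_Ico (fun _ => 1) h₁ hkA
  have e₂ := integral_mul_of_eq_const_Ico (fun _ => 1) h₂ hk_right
  simp only [mul_one, intervalIntegral.integral_const, smul_eq_mul] at i₁ i₂ e₀ e₁ e₂
  rw [hint (lam - y), hint y, ← intervalIntegral.integral_add_adjacent_intervals i₁ i₂,
    e₀, e₁, e₂]
  ring

/-- If `f` and `g` are `λ`-periodic two-layer piecewise constant functions,
then `⟨f·⟦g⟧⟩ = 0`. -/
theorem average_piecewise_mul_bracket_eq_zero
    (lam : ℝ) (hlam : 0 < lam) (f g : ℝ → ℝ) (fA fB gA gB : ℝ)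
    (hf_per : ∀ y, f (y + lam) = f y) (hg_per : ∀ y, g (y + lam) = g y)
    (hfA : ∀ y ∈ Set.Ico (0:ℝ) (lam / 2), f y = fA)
    (hfB : ∀ y ∈ Set.Ico (lam / 2) lam, f y = fB)
    (hgA : ∀ y ∈ Set.Ico (0:ℝ) (lam / 2), g y = gA)
    (hgB : ∀ y ∈ Set.Ico (lam / 2) lam, g y = gB)
    (G : ℝ → ℝ) (hG : IsBracket lam g G) :
    (1 / lam) * (∫ y in (0:ℝ)..lam, f y * G y) = 0 := by
  have hcont := hG.1
  have hsymm : ∫ y in (lam / 2)..lam, G y = ∫ y in (0:ℝ)..(lam / 2), G y := by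
    have hrefl := intervalIntegral.integral_comp_sub_left (a := 0) (b := lam / 2) G lam
    rw [sub_zero, sub_half] at hrefl
    rw [← hrefl]
    refine intervalIntegral.integral_congr fun y hy => ?_
    rw [Set.uIcc_of_le (by linarith)] at hy
    exact hG.apply_sub_of_two_layer hlam hgA hgB hy
  have hzero : ∫ y in (0:ℝ)..(lam / 2), G y = 0 := by
    have hmean := (mul_eq_zero.mp hG.2.2.1).resolve_left (one_div_ne_zero hlam.ne')
    rw [← intervalIntegral.integral_add_adjacent_intervals
      (hcont.intervalIntegrable 0 (lam / 2)) (hcont.intervalIntegrable (lam / 2) lam),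
      hsymm] at hmean
    linarith
  rw [integral_two_layer_mul hlam hfA hfB hcont, hsymm, hzero]
  ring
end

section
/- Let K_h, ρ_h, ρ_m > 0, let δ, α₁, α₂, β₁, β₂, γ₁, γ₂ be real parameters, let ω ∈ ℝ with ω ≠ 0, and let (k_x, k_y) ∈ ℝ². Set a = α₁k_y² + α₂k_x², b = β₁k_y² + β₂k_x², c = γ₁k_y² + γ₂k_x². There exist complex amplitudes (P, U, V) ≠ (0,0,0) such that p̄ = P e^{i(k_x x + k_y y − ωt)}, ū = U e^{i(·)}, v̄ = V e^{i(·)} solve the second-order homogenized system K_h⁻¹p̄_t + ū_x + v̄_y = δ²[α₁(ū_xyy + v̄_yyy) + α₂(ū_xxx + v̄_xxy)], ρ_h ū_t + p̄_x = δ²[β₁ p̄_xyy + β₂ p̄_xxx], ρ_m v̄_t + p̄_y = δ²[γ₁ p̄_yyy + γ₂ p̄_xxy] for all (x, y, t), if and only if ω² = K_h (1 + δ²a) [ (k_x²/ρ_h)(1 + δ²b) + (k_y²/ρ_m)(1 + δ²c) ]. Expanding in δ, this reproduces the O(δ²) terms of the effective dispersion relation of the homogenized medium. -/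
/-- Partial derivative in the first (`x`) variable of a complex field on `ℝ³`. -/
noncomputable def pdX (f : ℝ → ℝ → ℝ → ℂ) : ℝ → ℝ → ℝ → ℂ :=
  fun x y t => deriv (fun x' => f x' y t) x

/-- Partial derivative in the second (`y`) variable of a complex field on `ℝ³`. -/
noncomputable def pdY (f : ℝ → ℝ → ℝ → ℂ) : ℝ → ℝ → ℝ → ℂ :=
  fun x y t => deriv (fun y' => f x y' t) y

/-- Partial derivative in the third (`t`) variable of a complex field on `ℝ³`. -/
noncomputable def pdT (f : ℝ → ℝ → ℝ → ℂ) : ℝ → ℝ → ℝ → ℂ :=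
  fun x y t => deriv (fun t' => f x y t') t

/-- The plane wave `A e^{i(k_x x + k_y y − ω t)}`. -/
noncomputable def planeWave (A : ℂ) (kx ky ω : ℝ) : ℝ → ℝ → ℝ → ℂ :=
  fun x y t => A * Complex.exp (Complex.I * ((kx * x + ky * y - ω * t : ℝ) : ℂ))

theorem hasDerivAt_const_mul_exp_affine (A : ℂ) (k r s : ℝ) :
    HasDerivAt (fun s : ℝ => A * Complex.exp (Complex.I * ((k * s + r : ℝ) : ℂ)))
      (Complex.I * k * A * Complex.exp (Complex.I * ((k * s + r : ℝ) : ℂ))) s := by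
  have h : HasDerivAt (fun s : ℝ => k * s + r) k s := by
    simpa using ((hasDerivAt_id s).const_mul k).add_const r
  exact ((h.ofReal_comp.const_mul Complex.I).cexp.const_mul A).congr_deriv (by ring)

theorem pdX_planeWave (A : ℂ) (kx ky ω : ℝ) :
    pdX (planeWave A kx ky ω) = planeWave (Complex.I * kx * A) kx ky ω := by
  funext x y t
  convert (hasDerivAt_const_mul_exp_affine A kx (ky * y - ω * t) x).deriv using 1
  · simp only [pdX, planeWave, add_sub_assoc]
  · simp only [planeWave, add_sub_assoc]

theorem pdY_planeWave (A : ℂ) (kx ky ω : ℝ) :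
    pdY (planeWave A kx ky ω) = planeWave (Complex.I * ky * A) kx ky ω := by
  funext x y t
  have e (s : ℝ) : kx * x + ky * s - ω * t = ky * s + (kx * x - ω * t) := by ring
  convert (hasDerivAt_const_mul_exp_affine A ky (kx * x - ω * t) y).deriv using 1
  · simp only [pdY, planeWave, e]
  · simp only [planeWave, e]

theorem pdT_planeWave (A : ℂ) (kx ky ω : ℝ) :
    pdT (planeWave A kx ky ω) = planeWave (-(Complex.I * ω * A)) kx ky ω := by
  funext x y t
  have e (s : ℝ) : kx * x + ky * y - ω * s = -ω * s + (kx * x + ky * y) := by ring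
  convert (hasDerivAt_const_mul_exp_affine A (-ω) (kx * x + ky * y) t).deriv using 1
  · simp only [pdT, planeWave, e]
  · simp only [planeWave, e, Complex.ofReal_neg, mul_neg, neg_mul]

/-- A nontrivial plane wave solves the second-order homogenized system
(with `O(δ²)` dispersive corrections) iff
`ω² = K_h (1 + δ²a) [(k_x²/ρ_h)(1 + δ²b) + (k_y²/ρ_m)(1 + δ²c)]`,
where `a = α₁k_y² + α₂k_x²`, `b = β₁k_y² + β₂k_x²`, `c = γ₁k_y² + γ₂k_x²`. -/
theorem second_order_dispersion_relation
    (Kh ρh ρm : ℝ) (hKh : 0 < Kh) (hρh : 0 < ρh) (hρm : 0 < ρm)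
    (δ α₁ α₂ β₁ β₂ γ₁ γ₂ : ℝ) (ω kx ky : ℝ) (hω : ω ≠ 0)
    (a b c : ℝ)
    (ha : a = α₁ * ky ^ 2 + α₂ * kx ^ 2)
    (hb : b = β₁ * ky ^ 2 + β₂ * kx ^ 2)
    (hc : c = γ₁ * ky ^ 2 + γ₂ * kx ^ 2) :
    (∃ P U V : ℂ, (P, U, V) ≠ (0, 0, 0) ∧
      ∀ x y t : ℝ,
        ((Kh : ℂ)⁻¹ * pdT (planeWave P kx ky ω) x y t
            + pdX (planeWave U kx ky ω) x y t + pdY (planeWave V kx ky ω) x y t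
          = (δ : ℂ) ^ 2 *
            ((α₁ : ℂ) * (pdX (pdY (pdY (planeWave U kx ky ω))) x y t
                + pdY (pdY (pdY (planeWave V kx ky ω))) x y t)
            + (α₂ : ℂ) * (pdX (pdX (pdX (planeWave U kx ky ω))) x y t
                + pdX (pdX (pdY (planeWave V kx ky ω))) x y t))) ∧
        ((ρh : ℂ) * pdT (planeWave U kx ky ω) x y t + pdX (planeWave P kx ky ω) x y t
          = (δ : ℂ) ^ 2 *
            ((β₁ : ℂ) * pdX (pdY (pdY (planeWave P kx ky ω))) x y t
            + (β₂ : ℂ) * pdX (pdX (pdX (planeWave P kx ky ω))) x y t)) ∧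
        ((ρm : ℂ) * pdT (planeWave V kx ky ω) x y t + pdY (planeWave P kx ky ω) x y t
          = (δ : ℂ) ^ 2 *
            ((γ₁ : ℂ) * pdY (pdY (pdY (planeWave P kx ky ω))) x y t
            + (γ₂ : ℂ) * pdX (pdX (pdY (planeWave P kx ky ω))) x y t)))
    ↔ ω ^ 2 = Kh * (1 + δ ^ 2 * a) *
        (kx ^ 2 / ρh * (1 + δ ^ 2 * b) + ky ^ 2 / ρm * (1 + δ ^ 2 * c)) := by
  have hK : (Kh : ℂ) ≠ 0 := by exact_mod_cast hKh.ne'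
  have hh : (ρh : ℂ) ≠ 0 := by exact_mod_cast hρh.ne'
  have hm : (ρm : ℂ) ≠ 0 := by exact_mod_cast hρm.ne'
  have hw : (ω : ℂ) ≠ 0 := by exact_mod_cast hω
  have hI : Complex.I ≠ 0 := Complex.I_ne_zero
  have hI2 : Complex.I ^ 2 = -1 := Complex.I_sq
  have haC : (a : ℂ) = α₁ * ky ^ 2 + α₂ * kx ^ 2 := by rw [ha]; push_cast; ring
  have hbC : (b : ℂ) = β₁ * ky ^ 2 + β₂ * kx ^ 2 := by rw [hb]; push_cast; ring
  have hcC : (c : ℂ) = γ₁ * ky ^ 2 + γ₂ * kx ^ 2 := by rw [hc]; push_cast; ring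
  simp only [pdX_planeWave, pdY_planeWave, pdT_planeWave]
  constructor
  · rintro ⟨P, U, V, hne, h⟩
    obtain ⟨h₁, h₂, h₃⟩ := h 0 0 0
    simp only [planeWave, mul_zero, add_zero, sub_zero, Complex.ofReal_zero, Complex.exp_zero,
      mul_one] at h₁ h₂ h₃
    have hP : ω * P = Kh * (1 + δ ^ 2 * a) * (kx * U + ky * V) := by
      have hp : (Kh : ℂ)⁻¹ * (ω * P) = (1 + δ ^ 2 * a) * (kx * U + ky * V) := by
        apply mul_left_cancel₀ hI
        rw [haC]
        linear_combination -h₁ - δ ^ 2 * Complex.I * (α₁ * ky ^ 2 + α₂ * kx ^ 2) *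
          (kx * U + ky * V) * hI2
      rw [mul_assoc, ← hp, mul_inv_cancel_left₀ hK]
    have hU : ρh * (ω * U) = kx * (1 + δ ^ 2 * b) * P := by
      apply mul_left_cancel₀ hI
      rw [hbC]
      linear_combination -h₂ - δ ^ 2 * Complex.I * (β₁ * ky ^ 2 + β₂ * kx ^ 2) * kx * P * hI2
    have hV : ρm * (ω * V) = ky * (1 + δ ^ 2 * c) * P := by
      apply mul_left_cancel₀ hI
      rw [hcC]
      linear_combination -h₃ - δ ^ 2 * Complex.I * (γ₁ * ky ^ 2 + γ₂ * kx ^ 2) * ky * P * hI2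
    have hP0 : P ≠ 0 := by
      rintro rfl
      apply hne
      simp only [mul_zero, mul_eq_zero, hh, hm, hw, false_or] at hU hV
      rw [hU, hV]
    rw [← Complex.ofReal_inj]
    push_cast
    field_simp
    apply mul_right_cancel₀ hP0
    linear_combination ω * ρh * ρm * hP + Kh * (1 + δ ^ 2 * a) * kx * ρm * hU +
      Kh * (1 + δ ^ 2 * a) * ky * ρh * hV
  · intro h
    have hC : (ω : ℂ) ^ 2 = Kh * (1 + δ ^ 2 * a) *
        (kx ^ 2 / ρh * (1 + δ ^ 2 * b) + ky ^ 2 / ρm * (1 + δ ^ 2 * c)) := by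
      exact_mod_cast h
    refine ⟨ω, kx * (1 + δ ^ 2 * b) / ρh, ky * (1 + δ ^ 2 * c) / ρm, by simp [hω],
      fun x y t => ?_⟩
    simp only [planeWave]
    generalize Complex.exp (Complex.I * ((kx * x + ky * y - ω * t : ℝ) : ℂ)) = E
    set U : ℂ := kx * (1 + δ ^ 2 * b) / ρh with hUdef
    set V : ℂ := ky * (1 + δ ^ 2 * c) / ρm with hVdef
    have hP : (Kh : ℂ)⁻¹ * ω ^ 2 = (1 + δ ^ 2 * a) * (kx * U + ky * V) := by
      rw [hC, hUdef, hVdef, mul_assoc, inv_mul_cancel_left₀ hK]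
      ring
    have hU : ρh * U = kx * (1 + δ ^ 2 * b) := mul_div_cancel₀ _ hh
    have hV : ρm * V = ky * (1 + δ ^ 2 * c) := mul_div_cancel₀ _ hm
    rw [haC] at hP
    rw [hbC] at hU
    rw [hcC] at hV
    refine ⟨?_, ?_, ?_⟩
    · linear_combination -Complex.I * E * hP - δ ^ 2 * Complex.I *
        (α₁ * ky ^ 2 + α₂ * kx ^ 2) * (kx * U + ky * V) * E * hI2
    · linear_combination -Complex.I * E * ω * hU - δ ^ 2 * Complex.I *
        (β₁ * ky ^ 2 + β₂ * kx ^ 2) * kx * ω * E * hI2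
    · linear_combination -Complex.I * E * ω * hV - δ ^ 2 * Complex.I *
        (γ₁ * ky ^ 2 + γ₂ * kx ^ 2) * ky * ω * E * hI2
end

section
/- For the layered medium, define the fast-variable functions A = ⟦K⁻¹K_h − ρ⁻¹ρ_h⟧, B = ⟦K⁻¹K_h⟧, C = ⟦ρ ρ_m⁻¹⟧, F = ⟦ρ ρ_m⁻¹ B − C⟧, H = ⟦ρ ρ_h⁻¹ A⟧. Then the leading dispersive homogenization coefficients α₁ := K_h⟨K⁻¹F⟩ and α₂ := K_h⟨K⁻¹H⟩ satisfy α₁ = −(K_A − K_B)(Z_A² − Z_B²) λ² / (192 K_m² ρ_m) and α₂ = −(K_A − K_B)(c_A² − c_B²) ρ_m λ² / (192 K_m²). -/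
open MeasureTheory

open Set intervalIntegral

/-- A function that is quadratic on an open interval is integrable there, with the expected
integral. -/
lemma integral_of_eqOn_quadratic {a b c₀ c₁ c₂ : ℝ} {f : ℝ → ℝ} (hab : a ≤ b)
    (hf : ∀ x ∈ Ioo a b, f x = c₀ + c₁ * x + c₂ * x ^ 2) :
    IntervalIntegrable f volume a b ∧
      ∫ x in a..b, f x =
        c₀ * (b - a) + c₁ * (b ^ 2 - a ^ 2) / 2 + c₂ * (b ^ 3 - a ^ 3) / 3 := by
  have hcont : Continuous fun x : ℝ => c₀ + c₁ * x + c₂ * x ^ 2 := by fun_prop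
  refine ⟨(intervalIntegrable_congr_uIoo ?_).mpr (hcont.intervalIntegrable a b), ?_⟩
  · rw [uIoo_of_le hab]
    exact hf
  · rw [integral_congr_Ioo_of_le hab hf, integral_eq_sub_of_hasDerivAt
      (f := fun x => c₀ * x + c₁ * x ^ 2 / 2 + c₂ * x ^ 3 / 3) ?_ (hcont.intervalIntegrable a b)]
    · ring
    · intro x _
      have h := (((hasDerivAt_id x).const_mul c₀).add
        (((hasDerivAt_pow 2 x).const_mul c₁).div_const 2)).add
        (((hasDerivAt_pow 3 x).const_mul c₂).div_const 3)
      refine h.congr_deriv ?_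
      norm_num
      ring

/-- The integral over a period of a function that is quadratic on each half period. -/
lemma integral_of_eqOn_halves {lam p₀ p₁ p₂ q₀ q₁ q₂ : ℝ} {f : ℝ → ℝ} (hlam : 0 < lam)
    (hp : ∀ x ∈ Ioo 0 (lam / 2), f x = p₀ + p₁ * x + p₂ * x ^ 2)
    (hq : ∀ x ∈ Ioo (lam / 2) lam, f x = q₀ + q₁ * x + q₂ * x ^ 2) :
    ∫ x in (0:ℝ)..lam, f x =
      p₀ * lam / 2 + p₁ * lam ^ 2 / 8 + p₂ * lam ^ 3 / 24 +
        (q₀ * lam / 2 + q₁ * (3 * lam ^ 2) / 8 + q₂ * (7 * lam ^ 3) / 24) := by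
  obtain ⟨hi, hpi⟩ := integral_of_eqOn_quadratic (by linarith) hp
  obtain ⟨hj, hqj⟩ := integral_of_eqOn_quadratic (by linarith) hq
  rw [← integral_add_adjacent_intervals hi hj, hpi, hqj]
  ring

/-- The harmonic mean of a function that is constant on each half period. -/
lemma harmonic_mean_of_const_halves {lam p q : ℝ} {f : ℝ → ℝ} (hlam : 0 < lam)
    (hp₀ : 0 < p) (hq₀ : 0 < q)
    (hp : ∀ x ∈ Ioo 0 (lam / 2), f x = p) (hq : ∀ x ∈ Ioo (lam / 2) lam, f x = q) :
    ((1 / lam) * ∫ y in (0:ℝ)..lam, (f y)⁻¹)⁻¹ = 2 * p * q / (p + q) := by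
  rw [integral_of_eqOn_halves (p₀ := p⁻¹) (p₁ := 0) (p₂ := 0) (q₀ := q⁻¹) (q₁ := 0) (q₂ := 0) hlam
    (fun x hx => by rw [hp x hx]; ring) (fun x hx => by rw [hq x hx]; ring)]
  field_simp
  ring

/-- The bracket of a function that is affine on each half period, up to its value at `0`. -/
lemma IsBracket.eq_of_affine_halves {lam p₀ p₁ q₀ q₁ m : ℝ} {a F : ℝ → ℝ} (hlam : 0 < lam)
    (hF : IsBracket lam a F)
    (hp : ∀ x ∈ Ioo 0 (lam / 2), a x = p₀ + p₁ * x)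
    (hq : ∀ x ∈ Ioo (lam / 2) lam, a x = q₀ + q₁ * x)
    (hm : m = (p₀ + q₀) / 2 + p₁ * lam / 8 + q₁ * (3 * lam) / 8) :
    (∀ y ∈ Icc 0 (lam / 2), F y = F 0 + (p₀ - m) * y + p₁ / 2 * y ^ 2) ∧
    ∀ y ∈ Icc (lam / 2) lam, F y = F 0 + (p₀ - m) * (lam / 2) + p₁ / 2 * (lam / 2) ^ 2
      - (q₀ - m) * (lam / 2) - q₁ / 2 * (lam / 2) ^ 2 + (q₀ - m) * y + q₁ / 2 * y ^ 2 := by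
  have hmean : (1 / lam) * ∫ s in (0:ℝ)..lam, a s = m := by
    rw [integral_of_eqOn_halves (p₀ := p₀) (p₁ := p₁) (p₂ := 0) (q₀ := q₀) (q₁ := q₁) (q₂ := 0) hlam
      (fun x hx => by rw [hp x hx]; ring)
      (fun x hx => by rw [hq x hx]; ring), hm]
    field_simp
    ring
  have hFy := hF.2.2.2
  rw [hmean] at hFy
  have left {y : ℝ} (hy : y ∈ Icc 0 (lam / 2)) := integral_of_eqOn_quadratic
    (f := fun x => a x - m) (c₀ := p₀ - m) (c₁ := p₁) (c₂ := 0) hy.1 fun x hx => by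
      rw [hp x ⟨hx.1, hx.2.trans_le hy.2⟩]; ring
  have right {y : ℝ} (hy : y ∈ Icc (lam / 2) lam) := integral_of_eqOn_quadratic
    (f := fun x => a x - m) (c₀ := q₀ - m) (c₁ := q₁) (c₂ := 0) hy.1 fun x hx => by
      rw [hq x ⟨hx.1, hx.2.trans_le hy.2⟩]; ring
  constructor
  · intro y hy
    rw [hFy y, (left hy).2]
    ring
  · intro y hy
    have hmid : lam / 2 ∈ Icc 0 (lam / 2) := ⟨by linarith, le_rfl⟩
    rw [hFy y, ← integral_add_adjacent_intervals (left hmid).1 (right hy).1,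
      (left hmid).2, (right hy).2]
    ring

/-- The bracket of a function that is constant on each half period is a triangle wave. -/
lemma IsBracket.eq_of_const_halves {lam p q : ℝ} {a F : ℝ → ℝ} (hlam : 0 < lam)
    (hF : IsBracket lam a F)
    (hp : ∀ x ∈ Ioo 0 (lam / 2), a x = p) (hq : ∀ x ∈ Ioo (lam / 2) lam, a x = q) :
    (∀ y ∈ Ioo 0 (lam / 2), F y = (p - q) / 2 * (y - lam / 4)) ∧
    ∀ y ∈ Ioo (lam / 2) lam, F y = -((p - q) / 2 * (y - 3 * lam / 4)) := by
  obtain ⟨hl, hr⟩ := hF.eq_of_affine_halves (p₁ := 0) (q₁ := 0) hlam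
    (fun x hx => by rw [hp x hx]; ring) (fun x hx => by rw [hq x hx]; ring) rfl
  have hzero := hF.2.2.1
  rw [integral_of_eqOn_halves hlam (fun x hx => hl x (Ioo_subset_Icc_self hx))
    (fun x hx => hr x (Ioo_subset_Icc_self hx))] at hzero
  have hF0 : F 0 = -((p - q) / 2 * (lam / 4)) := by
    field_simp at hzero
    linarith
  constructor
  · intro y hy
    rw [hl y (Ioo_subset_Icc_self hy), hF0]
    ring
  · intro y hy
    rw [hr y (Ioo_subset_Icc_self hy), hF0]
    ring

/-- Weighted mean, with a weight constant on each half period, of the bracket of a function that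
is linear about the midpoint of each half period. -/
lemma IsBracket.integral_weight_mul {lam p q u v : ℝ} {a F w : ℝ → ℝ} (hlam : 0 < lam)
    (hF : IsBracket lam a F)
    (hp : ∀ x ∈ Ioo 0 (lam / 2), a x = p * (x - lam / 4))
    (hq : ∀ x ∈ Ioo (lam / 2) lam, a x = q * (x - 3 * lam / 4))
    (hu : ∀ x ∈ Ioo 0 (lam / 2), w x = u) (hv : ∀ x ∈ Ioo (lam / 2) lam, w x = v) :
    (1 / lam) * ∫ y in (0:ℝ)..lam, w y * F y = -((u - v) * (p - q) * lam ^ 2) / 192 := by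
  obtain ⟨hl, hr⟩ := hF.eq_of_affine_halves (p₀ := -(p * lam / 4)) (p₁ := p)
    (q₀ := -(q * (3 * lam) / 4)) (q₁ := q) (m := 0) hlam
    (fun x hx => by rw [hp x hx]; ring) (fun x hx => by rw [hq x hx]; ring) (by ring)
  have hzero := hF.2.2.1
  rw [integral_of_eqOn_halves hlam (fun x hx => hl x (Ioo_subset_Icc_self hx))
    (fun x hx => hr x (Ioo_subset_Icc_self hx))] at hzero
  have hF0 : F 0 = (p + q) * lam ^ 2 / 96 := by
    field_simp at hzero
    linarith
  rw [integral_of_eqOn_halves hlam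
    (p₀ := u * F 0) (p₁ := u * (-(p * lam / 4))) (p₂ := u * (p / 2))
    (q₀ := v * (F 0 + q * lam ^ 2 / 4))
    (q₁ := v * (-(q * (3 * lam) / 4))) (q₂ := v * (q / 2))
    (fun x hx => by rw [hu x hx, hl x (Ioo_subset_Icc_self hx)]; ring)
    (fun x hx => by rw [hv x hx, hr x (Ioo_subset_Icc_self hx)]; ring), hF0]
  field_simp
  ring

/-- For the layered medium, with the fast-variable functions
`A = ⟦K⁻¹K_h − ρ⁻¹ρ_h⟧`, `B = ⟦K⁻¹K_h⟧`, `C = ⟦ρ ρ_m⁻¹⟧`, `F = ⟦ρ ρ_m⁻¹ B − C⟧`,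
`H = ⟦ρ ρ_h⁻¹ A⟧`, the leading dispersive homogenization coefficients
`α₁ = K_h⟨K⁻¹F⟩` and `α₂ = K_h⟨K⁻¹H⟩` have the closed forms
`α₁ = −(K_A − K_B)(Z_A² − Z_B²)λ²/(192 K_m² ρ_m)` and
`α₂ = −(K_A − K_B)(c_A² − c_B²)ρ_m λ²/(192 K_m²)`. -/
theorem layered_alpha_coefficients
    (lam KA KB ρA ρB : ℝ)
    (hlam : 0 < lam) (hKA : 0 < KA) (hKB : 0 < KB) (hρA : 0 < ρA) (hρB : 0 < ρB)
    (K ρ : ℝ → ℝ)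
    (hK_per : ∀ y, K (y + lam) = K y) (hρ_per : ∀ y, ρ (y + lam) = ρ y)
    (hKvalA : ∀ y ∈ Set.Ico (0:ℝ) (lam / 2), K y = KA)
    (hKvalB : ∀ y ∈ Set.Ico (lam / 2) lam, K y = KB)
    (hρvalA : ∀ y ∈ Set.Ico (0:ℝ) (lam / 2), ρ y = ρA)
    (hρvalB : ∀ y ∈ Set.Ico (lam / 2) lam, ρ y = ρB)
    (Km ρm Kh ρh ZA ZB cA cB : ℝ)
    (hKm : Km = (KA + KB) / 2) (hρm : ρm = (ρA + ρB) / 2)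
    (hKh : Kh = ((1 / lam) * ∫ y in (0:ℝ)..lam, (K y)⁻¹)⁻¹)
    (hρh : ρh = ((1 / lam) * ∫ y in (0:ℝ)..lam, (ρ y)⁻¹)⁻¹)
    (hZA : ZA = Real.sqrt (KA * ρA)) (hZB : ZB = Real.sqrt (KB * ρB))
    (hcA : cA = Real.sqrt (KA / ρA)) (hcB : cB = Real.sqrt (KB / ρB))
    (A B C F H : ℝ → ℝ)
    (hA : IsBracket lam (fun yh => Kh / K yh - ρh / ρ yh) A)
    (hB : IsBracket lam (fun yh => Kh / K yh) B)
    (hC : IsBracket lam (fun yh => ρ yh / ρm) C)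
    (hF : IsBracket lam (fun yh => ρ yh / ρm * B yh - C yh) F)
    (hH : IsBracket lam (fun yh => ρ yh / ρh * A yh) H) :
    Kh * ((1 / lam) * ∫ y in (0:ℝ)..lam, (K y)⁻¹ * F y)
      = -((KA - KB) * (ZA ^ 2 - ZB ^ 2) * lam ^ 2) / (192 * Km ^ 2 * ρm)
    ∧ Kh * ((1 / lam) * ∫ y in (0:ℝ)..lam, (K y)⁻¹ * H y)
      = -((KA - KB) * (cA ^ 2 - cB ^ 2) * ρm * lam ^ 2) / (192 * Km ^ 2) := by
  have hZ : ZA ^ 2 - ZB ^ 2 = KA * ρA - KB * ρB := by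
    rw [hZA, hZB, Real.sq_sqrt (by positivity), Real.sq_sqrt (by positivity)]
  have hc : cA ^ 2 - cB ^ 2 = KA / ρA - KB / ρB := by
    rw [hcA, hcB, Real.sq_sqrt (by positivity), Real.sq_sqrt (by positivity)]
  replace hKvalA := fun y hy => hKvalA y (Ioo_subset_Ico_self hy)
  replace hKvalB := fun y hy => hKvalB y (Ioo_subset_Ico_self hy)
  replace hρvalA := fun y hy => hρvalA y (Ioo_subset_Ico_self hy)
  replace hρvalB := fun y hy => hρvalB y (Ioo_subset_Ico_self hy)
  replace hKh : Kh = 2 * KA * KB / (KA + KB) :=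
    hKh.trans (harmonic_mean_of_const_halves hlam hKA hKB hKvalA hKvalB)
  replace hρh : ρh = 2 * ρA * ρB / (ρA + ρB) :=
    hρh.trans (harmonic_mean_of_const_halves hlam hρA hρB hρvalA hρvalB)
  obtain ⟨hAl, hAr⟩ := hA.eq_of_const_halves hlam
    (p := Kh / KA - ρh / ρA) (q := Kh / KB - ρh / ρB)
    (fun x hx => by rw [hKvalA x hx, hρvalA x hx])
    (fun x hx => by rw [hKvalB x hx, hρvalB x hx])
  obtain ⟨hBl, hBr⟩ := hB.eq_of_const_halves hlam (p := Kh / KA) (q := Kh / KB)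
    (fun x hx => by rw [hKvalA x hx]) (fun x hx => by rw [hKvalB x hx])
  obtain ⟨hCl, hCr⟩ := hC.eq_of_const_halves hlam (p := ρA / ρm) (q := ρB / ρm)
    (fun x hx => by rw [hρvalA x hx]) (fun x hx => by rw [hρvalB x hx])
  constructor
  · rw [hF.integral_weight_mul hlam
      (p := ρA / ρm * ((Kh / KA - Kh / KB) / 2) - (ρA / ρm - ρB / ρm) / 2)
      (q := -(ρB / ρm * ((Kh / KA - Kh / KB) / 2) - (ρA / ρm - ρB / ρm) / 2))
      (u := KA⁻¹) (v := KB⁻¹)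
      (fun x hx => by rw [hρvalA x hx, hBl x hx, hCl x hx]; ring)
      (fun x hx => by rw [hρvalB x hx, hBr x hx, hCr x hx]; ring)
      (fun x hx => by rw [hKvalA x hx]) (fun x hx => by rw [hKvalB x hx]),
      hZ, hKh, hKm, hρm]
    field_simp
    ring
  · rw [hH.integral_weight_mul hlam
      (p := ρA / ρh * ((Kh / KA - ρh / ρA - (Kh / KB - ρh / ρB)) / 2))
      (q := -(ρB / ρh * ((Kh / KA - ρh / ρA - (Kh / KB - ρh / ρB)) / 2)))
      (u := KA⁻¹) (v := KB⁻¹)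
      (fun x hx => by rw [hρvalA x hx, hAl x hx]; ring)
      (fun x hx => by rw [hρvalB x hx, hAr x hx]; ring)
      (fun x hx => by rw [hKvalA x hx]) (fun x hx => by rw [hKvalB x hx]),
      hc, hKh, hρh, hKm, hρm]
    field_simp
    ring
end

section
/- For the layered medium, define the fast-variable functions A = ⟦K⁻¹K_h − ρ⁻¹ρ_h⟧, B = ⟦K⁻¹K_h⟧, C = ⟦ρ ρ_m⁻¹⟧, F = ⟦ρ ρ_m⁻¹ B − C⟧, H = ⟦ρ ρ_h⁻¹ A⟧. Then the homogenization coefficients β₁ := −ρ_h⟨ρ⁻¹F⟩ and β₂ := −ρ_h⟨ρ⁻¹H⟩ satisfy β₁ = (ρ_A − ρ_B)(Z_A² − Z_B²) λ² / (192 K_m ρ_m²) and β₂ = (ρ_A − ρ_B)(c_A² − c_B²) λ² / (192 K_m). -/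
open MeasureTheory

/-- The fundamental theorem of calculus for an integrand known only on a half-open interval. -/
theorem integral_eq_sub_of_eqOn_Ico {f g P : ℝ → ℝ} {a b : ℝ} (hab : a ≤ b)
    (hfg : ∀ y ∈ Set.Ico a b, f y = g y) (hg : Continuous g)
    (hP : ∀ y, HasDerivAt P (g y) y) :
    IntervalIntegrable f volume a b ∧ ∫ y in a..b, f y = P b - P a := by
  have hae : ∀ᵐ y, y ∈ Set.uIoc a b → g y = f y := by
    filter_upwards [Measure.ae_ne volume b] with y hy hmem
    rw [Set.uIoc_of_le hab] at hmem
    exact (hfg y ⟨hmem.1.le, lt_of_le_of_ne hmem.2 hy⟩).symm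
  refine ⟨(hg.intervalIntegrable a b).congr_ae
    ((ae_restrict_iff' measurableSet_uIoc).2 hae), ?_⟩
  rw [← intervalIntegral.integral_congr_ae hae]
  exact intervalIntegral.integral_eq_sub_of_hasDerivAt (fun y _ => hP y)
    (hg.intervalIntegrable a b)

/-- The fundamental theorem of calculus for an integrand given by two pieces. -/
theorem integral_two_layers {f g₁ g₂ P₁ P₂ : ℝ → ℝ} {a b c : ℝ} (hab : a ≤ b) (hbc : b ≤ c)
    (h₁ : ∀ y ∈ Set.Ico a b, f y = g₁ y) (h₂ : ∀ y ∈ Set.Ico b c, f y = g₂ y)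
    (hg₁ : Continuous g₁) (hg₂ : Continuous g₂)
    (hP₁ : ∀ y, HasDerivAt P₁ (g₁ y) y) (hP₂ : ∀ y, HasDerivAt P₂ (g₂ y) y) :
    ∫ y in a..c, f y = (P₁ b - P₁ a) + (P₂ c - P₂ b) := by
  obtain ⟨i₁, e₁⟩ := integral_eq_sub_of_eqOn_Ico hab h₁ hg₁ hP₁
  obtain ⟨i₂, e₂⟩ := integral_eq_sub_of_eqOn_Ico hbc h₂ hg₂ hP₂
  rw [← intervalIntegral.integral_add_adjacent_intervals i₁ i₂, e₁, e₂]

theorem hasDerivAt_cubic (c₀ c₁ c₂ y : ℝ) :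
    HasDerivAt (fun y => c₀ * y + c₁ * y ^ 2 / 2 + c₂ * y ^ 3 / 3)
      (c₀ + c₁ * y + c₂ * y ^ 2) y := by
  have h := (((hasDerivAt_id y).const_mul c₀).add
    ((((hasDerivAt_id y).pow 2).const_mul c₁).div_const 2)).add
    ((((hasDerivAt_id y).pow 3).const_mul c₂).div_const 3)
  refine h.congr_deriv ?_
  simp
  ring

/-- The integral of a function that is quadratic on each of two adjacent intervals. -/
theorem integral_piecewise_quadratic {f : ℝ → ℝ} {a b c : ℝ} (hab : a ≤ b) (hbc : b ≤ c)
    (c₀ c₁ c₂ d₀ d₁ d₂ : ℝ)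
    (h₁ : ∀ y ∈ Set.Ico a b, f y = c₀ + c₁ * y + c₂ * y ^ 2)
    (h₂ : ∀ y ∈ Set.Ico b c, f y = d₀ + d₁ * y + d₂ * y ^ 2) :
    ∫ y in a..c, f y =
      ((c₀ * b + c₁ * b ^ 2 / 2 + c₂ * b ^ 3 / 3) - (c₀ * a + c₁ * a ^ 2 / 2 + c₂ * a ^ 3 / 3))
      + ((d₀ * c + d₁ * c ^ 2 / 2 + d₂ * c ^ 3 / 3)
        - (d₀ * b + d₁ * b ^ 2 / 2 + d₂ * b ^ 3 / 3)) :=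
  integral_two_layers hab hbc h₁ h₂ (by fun_prop) (by fun_prop)
    (hasDerivAt_cubic c₀ c₁ c₂) (hasDerivAt_cubic d₀ d₁ d₂)

/-- The bracket of a function that, on the two halves of the period, is a constant plus a multiple
of the mean-zero triangular wave. -/
theorem IsBracket.eq_of_layers {lam : ℝ} (hlam : 0 < lam) {a G : ℝ → ℝ} (hG : IsBracket lam a G)
    (p q r s : ℝ)
    (h₁ : ∀ y ∈ Set.Ico 0 (lam / 2), a y = p * (y - lam / 4) + r)
    (h₂ : ∀ y ∈ Set.Ico (lam / 2) lam, a y = q * (3 * lam / 4 - y) + s) :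
    (∀ y ∈ Set.Ico 0 (lam / 2), G y =
      (r - s) / 2 * (y - lam / 4) + p * (y ^ 2 - lam / 2 * y) / 2 + (p - q) * lam ^ 2 / 96) ∧
    (∀ y ∈ Set.Ico (lam / 2) lam, G y =
      (r - s) / 2 * (3 * lam / 4 - y) - q * ((y - lam / 2) ^ 2 - lam / 2 * (y - lam / 2)) / 2
        + (p - q) * lam ^ 2 / 96) := by
  obtain ⟨-, -, hmean, hint⟩ := hG
  have hl : lam ≠ 0 := hlam.ne'
  have hm : (1 / lam) * ∫ y in (0:ℝ)..lam, a y = (r + s) / 2 := by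
    rw [integral_piecewise_quadratic (b := lam / 2) (by linarith) (by linarith)
      (r - p * lam / 4) p 0 (s + q * (3 * lam / 4)) (-q) 0
      (fun y hy => by rw [h₁ y hy]; ring) (fun y hy => by rw [h₂ y hy]; ring)]
    field_simp
    ring
  rw [hm] at hint
  have e₁ : ∀ y ∈ Set.Ico 0 (lam / 2), G y = G 0 +
      (r - s) / 2 * y + p * (y ^ 2 - lam / 2 * y) / 2 := by
    intro y hy
    rw [hint y, integral_piecewise_quadratic (b := y) hy.1 le_rfl
      (r - p * lam / 4 - (r + s) / 2) p 0 0 0 0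
      (fun z hz => by rw [h₁ z ⟨hz.1, hz.2.trans hy.2⟩]; ring)
      (fun z hz => absurd hz.2 (not_lt.2 hz.1))]
    ring
  have e₂ : ∀ y ∈ Set.Ico (lam / 2) lam, G y = G 0 + (r - s) / 2 * (lam - y)
      - q * ((y - lam / 2) ^ 2 - lam / 2 * (y - lam / 2)) / 2 := by
    intro y hy
    rw [hint y, integral_piecewise_quadratic (b := lam / 2) (by linarith) hy.1
      (r - p * lam / 4 - (r + s) / 2) p 0 (s + q * (3 * lam / 4) - (r + s) / 2) (-q) 0
      (fun z hz => by rw [h₁ z hz]; ring)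
      (fun z hz => by rw [h₂ z ⟨hz.1, hz.2.trans hy.2⟩]; ring)]
    ring
  have h0 : G 0 = -((r - s) / 2 * (lam / 4)) + (p - q) * lam ^ 2 / 96 := by
    rw [integral_piecewise_quadratic (b := lam / 2) (by linarith) (by linarith)
      (G 0) ((r - s) / 2 - p * lam / 4) (p / 2)
      (G 0 + (r - s) / 2 * lam - q * lam ^ 2 / 4) (-((r - s) / 2) + 3 * q * lam / 4) (-(q / 2))
      (fun y hy => by rw [e₁ y hy]; ring) (fun y hy => by rw [e₂ y hy]; ring)] at hmean
    refine mul_left_cancel₀ hl ?_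
    field_simp at hmean
    linear_combination hmean / 192
  refine ⟨fun y hy => ?_, fun y hy => ?_⟩
  · rw [e₁ y hy, h0]; ring
  · rw [e₂ y hy, h0]; ring

/-- The bracket of a two-valued layered function is a multiple of the triangular wave. -/
theorem IsBracket.eq_of_two_valued {lam : ℝ} (hlam : 0 < lam) {a G : ℝ → ℝ}
    (hG : IsBracket lam a G) (r s : ℝ)
    (h₁ : ∀ y ∈ Set.Ico 0 (lam / 2), a y = r) (h₂ : ∀ y ∈ Set.Ico (lam / 2) lam, a y = s) :
    (∀ y ∈ Set.Ico 0 (lam / 2), G y = (r - s) / 2 * (y - lam / 4)) ∧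
    (∀ y ∈ Set.Ico (lam / 2) lam, G y = (r - s) / 2 * (3 * lam / 4 - y)) := by
  obtain ⟨e₁, e₂⟩ := hG.eq_of_layers hlam 0 0 r s
    (fun y hy => by rw [h₁ y hy]; ring) (fun y hy => by rw [h₂ y hy]; ring)
  exact ⟨fun y hy => by rw [e₁ y hy]; ring, fun y hy => by rw [e₂ y hy]; ring⟩

/-- The mean of a two-valued layered function is the average of its values. -/
theorem mean_of_two_valued {lam : ℝ} (hlam : 0 < lam) {f : ℝ → ℝ} (r s : ℝ)
    (h₁ : ∀ y ∈ Set.Ico 0 (lam / 2), f y = r) (h₂ : ∀ y ∈ Set.Ico (lam / 2) lam, f y = s) :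
    (1 / lam) * ∫ y in (0:ℝ)..lam, f y = (r + s) / 2 := by
  have hl : lam ≠ 0 := hlam.ne'
  rw [integral_piecewise_quadratic (b := lam / 2) (by linarith) (by linarith) r 0 0 s 0 0
    (fun y hy => by rw [h₁ y hy]; ring) (fun y hy => by rw [h₂ y hy]; ring)]
  field_simp
  ring

/-- The weighted mean `⟨ρ⁻¹G⟩`, where `G` is the bracket of a triangular wave scaled by `p` and `q`
in the two layers. -/
theorem IsBracket.mean_inv_mul {lam : ℝ} (hlam : 0 < lam) {ρ a G : ℝ → ℝ} {ρA ρB : ℝ}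
    (hρvalA : ∀ y ∈ Set.Ico (0:ℝ) (lam / 2), ρ y = ρA)
    (hρvalB : ∀ y ∈ Set.Ico (lam / 2) lam, ρ y = ρB)
    (hG : IsBracket lam a G) (p q : ℝ)
    (h₁ : ∀ y ∈ Set.Ico 0 (lam / 2), a y = p * (y - lam / 4))
    (h₂ : ∀ y ∈ Set.Ico (lam / 2) lam, a y = q * (3 * lam / 4 - y)) :
    (1 / lam) * ∫ y in (0:ℝ)..lam, (ρ y)⁻¹ * G y = (p + q) * (ρB⁻¹ - ρA⁻¹) * lam ^ 2 / 192 := by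
  have hl : lam ≠ 0 := hlam.ne'
  obtain ⟨e₁, e₂⟩ := hG.eq_of_layers hlam p q 0 0
    (fun y hy => by rw [h₁ y hy]; ring) (fun y hy => by rw [h₂ y hy]; ring)
  rw [integral_piecewise_quadratic (b := lam / 2) (by linarith) (by linarith)
    (ρA⁻¹ * ((p - q) * lam ^ 2 / 96)) (-(ρA⁻¹ * p * lam / 4)) (ρA⁻¹ * p / 2)
    (ρB⁻¹ * ((p - q) * lam ^ 2 / 96 - q * lam ^ 2 / 4)) (ρB⁻¹ * (3 * q * lam / 4))
    (-(ρB⁻¹ * q / 2))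
    (fun y hy => by rw [e₁ y hy, hρvalA y hy]; ring)
    (fun y hy => by rw [e₂ y hy, hρvalB y hy]; ring)]
  generalize ρA⁻¹ = x
  generalize ρB⁻¹ = z
  field_simp
  ring

/-- For the layered medium, with the fast-variable functions
`A = ⟦K⁻¹K_h − ρ⁻¹ρ_h⟧`, `B = ⟦K⁻¹K_h⟧`, `C = ⟦ρ ρ_m⁻¹⟧`, `F = ⟦ρ ρ_m⁻¹ B − C⟧`,
`H = ⟦ρ ρ_h⁻¹ A⟧`, the homogenization coefficients
`β₁ = −ρ_h⟨ρ⁻¹F⟩` and `β₂ = −ρ_h⟨ρ⁻¹H⟩` have the closed forms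
`β₁ = (ρ_A − ρ_B)(Z_A² − Z_B²)λ²/(192 K_m ρ_m²)` and
`β₂ = (ρ_A − ρ_B)(c_A² − c_B²)λ²/(192 K_m)`. -/
theorem layered_beta_coefficients
    (lam KA KB ρA ρB : ℝ)
    (hlam : 0 < lam) (hKA : 0 < KA) (hKB : 0 < KB) (hρA : 0 < ρA) (hρB : 0 < ρB)
    (K ρ : ℝ → ℝ)
    (hK_per : ∀ y, K (y + lam) = K y) (hρ_per : ∀ y, ρ (y + lam) = ρ y)
    (hKvalA : ∀ y ∈ Set.Ico (0:ℝ) (lam / 2), K y = KA)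
    (hKvalB : ∀ y ∈ Set.Ico (lam / 2) lam, K y = KB)
    (hρvalA : ∀ y ∈ Set.Ico (0:ℝ) (lam / 2), ρ y = ρA)
    (hρvalB : ∀ y ∈ Set.Ico (lam / 2) lam, ρ y = ρB)
    (Km ρm Kh ρh ZA ZB cA cB : ℝ)
    (hKm : Km = (KA + KB) / 2) (hρm : ρm = (ρA + ρB) / 2)
    (hKh : Kh = ((1 / lam) * ∫ y in (0:ℝ)..lam, (K y)⁻¹)⁻¹)
    (hρh : ρh = ((1 / lam) * ∫ y in (0:ℝ)..lam, (ρ y)⁻¹)⁻¹)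
    (hZA : ZA = Real.sqrt (KA * ρA)) (hZB : ZB = Real.sqrt (KB * ρB))
    (hcA : cA = Real.sqrt (KA / ρA)) (hcB : cB = Real.sqrt (KB / ρB))
    (A B C F H : ℝ → ℝ)
    (hA : IsBracket lam (fun yh => Kh / K yh - ρh / ρ yh) A)
    (hB : IsBracket lam (fun yh => Kh / K yh) B)
    (hC : IsBracket lam (fun yh => ρ yh / ρm) C)
    (hF : IsBracket lam (fun yh => ρ yh / ρm * B yh - C yh) F)
    (hH : IsBracket lam (fun yh => ρ yh / ρh * A yh) H) :
    -(ρh * ((1 / lam) * ∫ y in (0:ℝ)..lam, (ρ y)⁻¹ * F y))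
      = (ρA - ρB) * (ZA ^ 2 - ZB ^ 2) * lam ^ 2 / (192 * Km * ρm ^ 2)
    ∧ -(ρh * ((1 / lam) * ∫ y in (0:ℝ)..lam, (ρ y)⁻¹ * H y))
      = (ρA - ρB) * (cA ^ 2 - cB ^ 2) * lam ^ 2 / (192 * Km) := by
  have hKh' : Kh = 2 * KA * KB / (KA + KB) := by
    rw [hKh, mean_of_two_valued hlam KA⁻¹ KB⁻¹ (fun y hy => by rw [hKvalA y hy])
      (fun y hy => by rw [hKvalB y hy])]
    field_simp
    ring
  have hρh' : ρh = 2 * ρA * ρB / (ρA + ρB) := by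
    rw [hρh, mean_of_two_valued hlam ρA⁻¹ ρB⁻¹ (fun y hy => by rw [hρvalA y hy])
      (fun y hy => by rw [hρvalB y hy])]
    field_simp
    ring
  obtain ⟨A₁, A₂⟩ := hA.eq_of_two_valued hlam (Kh / KA - ρh / ρA) (Kh / KB - ρh / ρB)
    (fun y hy => by rw [hKvalA y hy, hρvalA y hy]) (fun y hy => by rw [hKvalB y hy, hρvalB y hy])
  obtain ⟨B₁, B₂⟩ := hB.eq_of_two_valued hlam (Kh / KA) (Kh / KB)
    (fun y hy => by rw [hKvalA y hy]) (fun y hy => by rw [hKvalB y hy])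
  obtain ⟨C₁, C₂⟩ := hC.eq_of_two_valued hlam (ρA / ρm) (ρB / ρm)
    (fun y hy => by rw [hρvalA y hy]) (fun y hy => by rw [hρvalB y hy])
  have meanF := hF.mean_inv_mul hlam hρvalA hρvalB
    (ρA / ρm * ((Kh / KA - Kh / KB) / 2) - (ρA / ρm - ρB / ρm) / 2)
    (ρB / ρm * ((Kh / KA - Kh / KB) / 2) - (ρA / ρm - ρB / ρm) / 2)
    (fun y hy => by rw [hρvalA y hy, B₁ y hy, C₁ y hy]; ring)
    (fun y hy => by rw [hρvalB y hy, B₂ y hy, C₂ y hy]; ring)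
  have meanH := hH.mean_inv_mul hlam hρvalA hρvalB
    (ρA / ρh * ((Kh / KA - ρh / ρA - (Kh / KB - ρh / ρB)) / 2))
    (ρB / ρh * ((Kh / KA - ρh / ρA - (Kh / KB - ρh / ρB)) / 2))
    (fun y hy => by rw [hρvalA y hy, A₁ y hy]; ring)
    (fun y hy => by rw [hρvalB y hy, A₂ y hy]; ring)
  rw [meanF, meanH, hZA, hZB, hcA, hcB, Real.sq_sqrt (by positivity), Real.sq_sqrt (by positivity),
    Real.sq_sqrt (by positivity), Real.sq_sqrt (by positivity), hKh', hρh', hKm, hρm]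
  constructor
  · field_simp
    ring
  · field_simp
    ring
end

section
/- For the layered medium, define the fast-variable functions A = ⟦K⁻¹K_h − ρ⁻¹ρ_h⟧, B = ⟦K⁻¹K_h⟧, C = ⟦ρ ρ_m⁻¹⟧, D = ⟦K⁻¹K_h C − ρ⁻¹ρ_h C − A⟧, E = ⟦K⁻¹K_h C − B⟧. Then the homogenization coefficients γ₁ := ρ_m⁻¹⟨ρE⟩ and γ₂ := ρ_h⁻¹⟨ρD⟩ satisfy γ₁ = −(ρ_A − ρ_B)(Z_A² − Z_B²) λ² / (192 K_m ρ_m²) and γ₂ = −(ρ_A − ρ_B)(c_A² − c_B²) λ² / (192 K_m). -/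
open MeasureTheory

/-- The integral of a quadratic polynomial written around a centre `m`. -/
theorem integral_centered_quadratic (r c p m a b : ℝ) :
    ∫ y in a..b, (r + c * (y - m) + p * (y - m) ^ 2)
      = r * (b - a) + c / 2 * ((b - m) ^ 2 - (a - m) ^ 2)
        + p / 3 * ((b - m) ^ 3 - (a - m) ^ 3) := by
  have hderiv : ∀ y ∈ Set.uIcc a b, HasDerivAt
      (fun y : ℝ => r * (y - m) + c / 2 * (y - m) ^ 2 + p / 3 * (y - m) ^ 3)
      (r + c * (y - m) + p * (y - m) ^ 2) y := by
    intro y _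
    have h1 : HasDerivAt (fun y : ℝ => y - m) 1 y := (hasDerivAt_id y).sub_const m
    refine (((h1.const_mul r).add ((h1.pow 2).const_mul (c / 2))).add
      ((h1.pow 3).const_mul (p / 3))).congr_deriv ?_
    push_cast
    ring
  rw [intervalIntegral.integral_eq_sub_of_hasDerivAt hderiv
    (Continuous.intervalIntegrable (by fun_prop) _ _)]
  ring

/-- `f` is quadratic on each of the two layers `[0, lam / 2)` and `[lam / 2, lam)`, with
coefficients `r, c, p` taken around the centre of the layer. -/
def IsLayeredQuadratic (lam r₁ c₁ p₁ r₂ c₂ p₂ : ℝ) (f : ℝ → ℝ) : Prop :=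
  (∀ y ∈ Set.Ico (0 : ℝ) (lam / 2),
    f y = r₁ + c₁ * (y - lam / 4) + p₁ * (y - lam / 4) ^ 2) ∧
  ∀ y ∈ Set.Ico (lam / 2) lam,
    f y = r₂ + c₂ * (y - 3 * lam / 4) + p₂ * (y - 3 * lam / 4) ^ 2

namespace IsLayeredQuadratic

variable {lam r₁ c₁ p₁ r₂ c₂ p₂ : ℝ} {f : ℝ → ℝ}

theorem integral_first_layer (hf : IsLayeredQuadratic lam r₁ c₁ p₁ r₂ c₂ p₂ f)
    {y : ℝ} (hy : y ∈ Set.Icc 0 (lam / 2)) :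
    ∫ s in (0 : ℝ)..y, f s
      = r₁ * y + c₁ / 2 * ((y - lam / 4) ^ 2 - (lam / 4) ^ 2)
        + p₁ / 3 * ((y - lam / 4) ^ 3 + (lam / 4) ^ 3) := by
  rw [intervalIntegral.integral_congr_Ioo_of_le hy.1
    (fun s hs => hf.1 s ⟨hs.1.le, hs.2.trans_le hy.2⟩), integral_centered_quadratic]
  ring

theorem integral_second_layer (hf : IsLayeredQuadratic lam r₁ c₁ p₁ r₂ c₂ p₂ f)
    {y : ℝ} (hlam : 0 < lam) (hy : y ∈ Set.Icc (lam / 2) lam) :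
    ∫ s in (0 : ℝ)..y, f s
      = r₁ * (lam / 2) + p₁ * lam ^ 3 / 96 + r₂ * (y - lam / 2)
        + c₂ / 2 * ((y - 3 * lam / 4) ^ 2 - (lam / 4) ^ 2)
        + p₂ / 3 * ((y - 3 * lam / 4) ^ 3 + (lam / 4) ^ 3) := by
  have hfirst : Set.EqOn (fun s => r₁ + c₁ * (s - lam / 4) + p₁ * (s - lam / 4) ^ 2) f
      (Set.uIoo 0 (lam / 2)) := by
    rw [Set.uIoo_of_le (by positivity)]
    exact fun s hs => (hf.1 s ⟨hs.1.le, hs.2⟩).symm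
  have hsecond : Set.EqOn (fun s => r₂ + c₂ * (s - 3 * lam / 4) + p₂ * (s - 3 * lam / 4) ^ 2) f
      (Set.uIoo (lam / 2) y) := by
    rw [Set.uIoo_of_le hy.1]
    exact fun s hs => (hf.2 s ⟨hs.1.le, hs.2.trans_le hy.2⟩).symm
  have hint₁ : IntervalIntegrable f volume 0 (lam / 2) :=
    (Continuous.intervalIntegrable (by fun_prop) _ _).congr_uIoo hfirst
  have hint₂ : IntervalIntegrable f volume (lam / 2) y :=
    (Continuous.intervalIntegrable (by fun_prop) _ _).congr_uIoo hsecond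
  rw [← intervalIntegral.integral_add_adjacent_intervals hint₁ hint₂,
    ← intervalIntegral.integral_congr_uIoo hfirst, ← intervalIntegral.integral_congr_uIoo hsecond,
    integral_centered_quadratic, integral_centered_quadratic]
  ring

theorem integral_period (hf : IsLayeredQuadratic lam r₁ c₁ p₁ r₂ c₂ p₂ f) (hlam : 0 < lam) :
    ∫ s in (0 : ℝ)..lam, f s = lam / 2 * (r₁ + r₂) + lam ^ 3 / 96 * (p₁ + p₂) := by
  rw [hf.integral_second_layer hlam ⟨by linarith, le_rfl⟩]
  ring

/-- The bracket of a layerwise affine function is layerwise quadratic. -/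
theorem bracket {F : ℝ → ℝ} (hf : IsLayeredQuadratic lam r₁ c₁ 0 r₂ c₂ 0 f)
    (hlam : 0 < lam) (hF : IsBracket lam f F) :
    IsLayeredQuadratic lam ((c₂ - 2 * c₁) * lam ^ 2 / 96) ((r₁ - r₂) / 2) (c₁ / 2)
      ((c₁ - 2 * c₂) * lam ^ 2 / 96) ((r₂ - r₁) / 2) (c₂ / 2) F := by
  obtain ⟨-, -, hmean, hprim⟩ := hF
  have havg : (1 / lam) * ∫ s in (0 : ℝ)..lam, f s = (r₁ + r₂) / 2 := by
    rw [hf.integral_period hlam]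
    field_simp
    ring
  rw [havg] at hprim
  have hsub : IsLayeredQuadratic lam ((r₁ - r₂) / 2) c₁ 0 ((r₂ - r₁) / 2) c₂ 0
      (fun s => f s - (r₁ + r₂) / 2) :=
    ⟨fun y hy => by simp only [hf.1 y hy]; ring, fun y hy => by simp only [hf.2 y hy]; ring⟩
  have hF₀ : IsLayeredQuadratic lam
      (F 0 + (r₁ - r₂) / 2 * (lam / 4) - c₁ * lam ^ 2 / 32) ((r₁ - r₂) / 2) (c₁ / 2)
      (F 0 + (r₁ - r₂) / 2 * (lam / 4) - c₂ * lam ^ 2 / 32) ((r₂ - r₁) / 2) (c₂ / 2) F := by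
    refine ⟨fun y hy => ?_, fun y hy => ?_⟩
    · rw [hprim y, hsub.integral_first_layer ⟨hy.1, hy.2.le⟩]
      ring
    · rw [hprim y, hsub.integral_second_layer hlam ⟨hy.1, hy.2.le⟩]
      ring
  have hzero : F 0 = (c₁ + c₂) * lam ^ 2 / 96 - (r₁ - r₂) / 2 * (lam / 4) := by
    rw [hF₀.integral_period hlam] at hmean
    field_simp at hmean
    linarith
  refine ⟨fun y hy => ?_, fun y hy => ?_⟩
  · rw [hF₀.1 y hy, hzero]
    ring
  · rw [hF₀.2 y hy, hzero]
    ring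

/-- The mean of a layerwise constant function times the bracket of a layerwise affine one. -/
theorem integral_mul_bracket {ρ F : ℝ → ℝ} {ρA ρB : ℝ}
    (hf : IsLayeredQuadratic lam r₁ c₁ 0 r₂ c₂ 0 f) (hlam : 0 < lam)
    (hF : IsBracket lam f F)
    (hρA : ∀ y ∈ Set.Ico (0 : ℝ) (lam / 2), ρ y = ρA)
    (hρB : ∀ y ∈ Set.Ico (lam / 2) lam, ρ y = ρB) :
    (1 / lam) * ∫ y in (0 : ℝ)..lam, ρ y * F y = -(ρA - ρB) * (c₁ - c₂) * lam ^ 2 / 192 := by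
  have hbr := hf.bracket hlam hF
  have hmul : IsLayeredQuadratic lam
      (ρA * ((c₂ - 2 * c₁) * lam ^ 2 / 96)) (ρA * ((r₁ - r₂) / 2)) (ρA * (c₁ / 2))
      (ρB * ((c₁ - 2 * c₂) * lam ^ 2 / 96)) (ρB * ((r₂ - r₁) / 2)) (ρB * (c₂ / 2))
      (fun y => ρ y * F y) :=
    ⟨fun y hy => by simp only [hρA y hy, hbr.1 y hy]; ring,
      fun y hy => by simp only [hρB y hy, hbr.2 y hy]; ring⟩
  rw [hmul.integral_period hlam]
  field_simp
  ring

end IsLayeredQuadratic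

/-- The harmonic mean of a function taking two constant values on the two layers. -/
theorem harmonic_mean_layered {lam a b : ℝ} {f : ℝ → ℝ} (hlam : 0 < lam) (ha : 0 < a) (hb : 0 < b)
    (hfa : ∀ y ∈ Set.Ico (0 : ℝ) (lam / 2), f y = a)
    (hfb : ∀ y ∈ Set.Ico (lam / 2) lam, f y = b) :
    ((1 / lam) * ∫ y in (0 : ℝ)..lam, (f y)⁻¹)⁻¹ = 2 * a * b / (a + b) := by
  have hinv : IsLayeredQuadratic lam a⁻¹ 0 0 b⁻¹ 0 0 (fun y => (f y)⁻¹) :=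
    ⟨fun y hy => by simp only [hfa y hy]; ring, fun y hy => by simp only [hfb y hy]; ring⟩
  rw [hinv.integral_period hlam]
  field_simp
  ring

/-- For the layered medium, with the fast-variable functions
`A = ⟦K⁻¹K_h − ρ⁻¹ρ_h⟧`, `B = ⟦K⁻¹K_h⟧`, `C = ⟦ρ ρ_m⁻¹⟧`,
`D = ⟦K⁻¹K_h C − ρ⁻¹ρ_h C − A⟧`, `E = ⟦K⁻¹K_h C − B⟧`, the homogenization coefficients
`γ₁ = ρ_m⁻¹⟨ρE⟩` and `γ₂ = ρ_h⁻¹⟨ρD⟩` have the closed forms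
`γ₁ = −(ρ_A − ρ_B)(Z_A² − Z_B²)λ²/(192 K_m ρ_m²)` and
`γ₂ = −(ρ_A − ρ_B)(c_A² − c_B²)λ²/(192 K_m)`. -/
theorem layered_gamma_coefficients
    (lam KA KB ρA ρB : ℝ)
    (hlam : 0 < lam) (hKA : 0 < KA) (hKB : 0 < KB) (hρA : 0 < ρA) (hρB : 0 < ρB)
    (K ρ : ℝ → ℝ)
    (hK_per : ∀ y, K (y + lam) = K y) (hρ_per : ∀ y, ρ (y + lam) = ρ y)
    (hKvalA : ∀ y ∈ Set.Ico (0:ℝ) (lam / 2), K y = KA)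
    (hKvalB : ∀ y ∈ Set.Ico (lam / 2) lam, K y = KB)
    (hρvalA : ∀ y ∈ Set.Ico (0:ℝ) (lam / 2), ρ y = ρA)
    (hρvalB : ∀ y ∈ Set.Ico (lam / 2) lam, ρ y = ρB)
    (Km ρm Kh ρh ZA ZB cA cB : ℝ)
    (hKm : Km = (KA + KB) / 2) (hρm : ρm = (ρA + ρB) / 2)
    (hKh : Kh = ((1 / lam) * ∫ y in (0:ℝ)..lam, (K y)⁻¹)⁻¹)
    (hρh : ρh = ((1 / lam) * ∫ y in (0:ℝ)..lam, (ρ y)⁻¹)⁻¹)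
    (hZA : ZA = Real.sqrt (KA * ρA)) (hZB : ZB = Real.sqrt (KB * ρB))
    (hcA : cA = Real.sqrt (KA / ρA)) (hcB : cB = Real.sqrt (KB / ρB))
    (A B C D E : ℝ → ℝ)
    (hA : IsBracket lam (fun yh => Kh / K yh - ρh / ρ yh) A)
    (hB : IsBracket lam (fun yh => Kh / K yh) B)
    (hC : IsBracket lam (fun yh => ρ yh / ρm) C)
    (hD : IsBracket lam (fun yh => Kh / K yh * C yh - ρh / ρ yh * C yh - A yh) D)
    (hE : IsBracket lam (fun yh => Kh / K yh * C yh - B yh) E) :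
    ρm⁻¹ * ((1 / lam) * ∫ y in (0:ℝ)..lam, ρ y * E y)
      = -((ρA - ρB) * (ZA ^ 2 - ZB ^ 2) * lam ^ 2) / (192 * Km * ρm ^ 2)
    ∧ ρh⁻¹ * ((1 / lam) * ∫ y in (0:ℝ)..lam, ρ y * D y)
      = -((ρA - ρB) * (cA ^ 2 - cB ^ 2) * lam ^ 2) / (192 * Km) := by
  rw [harmonic_mean_layered hlam hKA hKB hKvalA hKvalB] at hKh
  rw [harmonic_mean_layered hlam hρA hρB hρvalA hρvalB] at hρh
  have hA' := IsLayeredQuadratic.bracket (r₁ := Kh / KA - ρh / ρA) (c₁ := 0)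
    (r₂ := Kh / KB - ρh / ρB) (c₂ := 0)
    ⟨fun y hy => by rw [hKvalA y hy, hρvalA y hy]; ring,
      fun y hy => by rw [hKvalB y hy, hρvalB y hy]; ring⟩ hlam hA
  have hB' := IsLayeredQuadratic.bracket (r₁ := Kh / KA) (c₁ := 0) (r₂ := Kh / KB) (c₂ := 0)
    ⟨fun y hy => by rw [hKvalA y hy]; ring, fun y hy => by rw [hKvalB y hy]; ring⟩ hlam hB
  have hC' := IsLayeredQuadratic.bracket (r₁ := ρA / ρm) (c₁ := 0) (r₂ := ρB / ρm) (c₂ := 0)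
    ⟨fun y hy => by rw [hρvalA y hy]; ring, fun y hy => by rw [hρvalB y hy]; ring⟩ hlam hC
  have hEmean := IsLayeredQuadratic.integral_mul_bracket (r₁ := 0) (r₂ := 0)
    (c₁ := Kh / KA * ((ρA / ρm - ρB / ρm) / 2) - (Kh / KA - Kh / KB) / 2)
    (c₂ := Kh / KB * ((ρB / ρm - ρA / ρm) / 2) - (Kh / KB - Kh / KA) / 2)
    ⟨fun y hy => by rw [hKvalA y hy, hC'.1 y hy, hB'.1 y hy]; ring,
      fun y hy => by rw [hKvalB y hy, hC'.2 y hy, hB'.2 y hy]; ring⟩ hlam hE hρvalA hρvalB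
  have hDmean := IsLayeredQuadratic.integral_mul_bracket (r₁ := 0) (r₂ := 0)
    (c₁ := (Kh / KA - ρh / ρA) * ((ρA / ρm - ρB / ρm) / 2)
      - ((Kh / KA - ρh / ρA) - (Kh / KB - ρh / ρB)) / 2)
    (c₂ := (Kh / KB - ρh / ρB) * ((ρB / ρm - ρA / ρm) / 2)
      - ((Kh / KB - ρh / ρB) - (Kh / KA - ρh / ρA)) / 2)
    ⟨fun y hy => by rw [hKvalA y hy, hρvalA y hy, hC'.1 y hy, hA'.1 y hy]; ring,
      fun y hy => by rw [hKvalB y hy, hρvalB y hy, hC'.2 y hy, hA'.2 y hy]; ring⟩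
    hlam hD hρvalA hρvalB
  rw [hEmean, hDmean, hZA, hZB, hcA, hcB, Real.sq_sqrt (by positivity),
    Real.sq_sqrt (by positivity), Real.sq_sqrt (by positivity), Real.sq_sqrt (by positivity),
    hKh, hρh, hKm, hρm]
  constructor
  · field_simp
    ring
  · field_simp
    ring
end

section
/- Let λ > 0 and let K, ρ : ℝ → ℝ be positive, locally integrable, λ-periodic functions with constant sound speed, i.e., K(ŷ)/ρ(ŷ) = c² for some constant c > 0 and all ŷ. Set K_h = ⟨K⁻¹⟩⁻¹ and ρ_h = ⟨ρ⁻¹⟩⁻¹. Then K⁻¹K_h = ρ⁻¹ρ_h identically, so the fast-variable function A := ⟦K⁻¹K_h − ρ⁻¹ρ_h⟧ vanishes identically; consequently H := ⟦ρ ρ_h⁻¹ A⟧ ≡ 0 and D := ⟦K⁻¹K_h C − ρ⁻¹ρ_h C − A⟧ ≡ 0 for any continuous λ-periodic C, and therefore the transverse dispersive homogenization coefficients α₂ := K_h⟨K⁻¹H⟩, β₂ := −ρ_h⟨ρ⁻¹H⟩ and γ₂ := ρ_h⁻¹⟨ρD⟩ are all zero. In particular, a medium with constant sound speed exhibits no effective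 dispersion for transversely propagating waves at order δ². -/
open MeasureTheory

/-- The bracket of the zero function vanishes identically. -/
theorem IsBracket.eq_zero {lam : ℝ} (hlam : 0 < lam) {a F : ℝ → ℝ}
    (h : IsBracket lam a F) (ha : ∀ y, a y = 0) (y : ℝ) : F y = 0 := by
  obtain ⟨-, -, hmean, hF⟩ := h
  have hconst : ∀ y, F y = F 0 := fun y => by simpa [ha] using hF y
  simp only [hconst, intervalIntegral.integral_const, sub_zero, smul_eq_mul] at hmean
  rw [hconst y]
  field_simp at hmean
  exact hmean

/-- In a `λ`-periodic medium with constant sound speed (`K = c²ρ`),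
one has `K⁻¹K_h = ρ⁻¹ρ_h`, the fast-variable functions `A = ⟦K⁻¹K_h − ρ⁻¹ρ_h⟧`,
`H = ⟦ρ ρ_h⁻¹ A⟧` and `D = ⟦K⁻¹K_h C − ρ⁻¹ρ_h C − A⟧` (for any continuous `λ`-periodic `C`)
vanish identically, and hence the transverse dispersive homogenization coefficients
`α₂ = K_h⟨K⁻¹H⟩`, `β₂ = −ρ_h⟨ρ⁻¹H⟩`, `γ₂ = ρ_h⁻¹⟨ρD⟩` are all zero: a medium with
constant sound speed exhibits no effective transverse dispersion at order `δ²`. -/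
theorem constant_sound_speed_no_transverse_dispersion
    (lam c : ℝ) (hlam : 0 < lam) (hc : 0 < c)
    (K ρ : ℝ → ℝ) (hKpos : ∀ yh, 0 < K yh) (hρpos : ∀ yh, 0 < ρ yh)
    (hKint : LocallyIntegrable K volume) (hρint : LocallyIntegrable ρ volume)
    (hK_per : ∀ y, K (y + lam) = K y) (hρ_per : ∀ y, ρ (y + lam) = ρ y)
    (hspeed : ∀ yh, K yh / ρ yh = c ^ 2)
    (Kh ρh : ℝ)
    (hKh : Kh = ((1 / lam) * ∫ y in (0:ℝ)..lam, (K y)⁻¹)⁻¹)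
    (hρh : ρh = ((1 / lam) * ∫ y in (0:ℝ)..lam, (ρ y)⁻¹)⁻¹) :
    (∀ yh, Kh / K yh = ρh / ρ yh)
    ∧ ∀ C : ℝ → ℝ, Continuous C → (∀ y, C (y + lam) = C y) →
      ∀ A H D : ℝ → ℝ,
        IsBracket lam (fun yh => Kh / K yh - ρh / ρ yh) A →
        IsBracket lam (fun yh => ρ yh / ρh * A yh) H →
        IsBracket lam (fun yh => Kh / K yh * C yh - ρh / ρ yh * C yh - A yh) D →
        (∀ yh, A yh = 0) ∧ (∀ yh, H yh = 0) ∧ (∀ yh, D yh = 0)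
        ∧ Kh * ((1 / lam) * ∫ y in (0:ℝ)..lam, (K y)⁻¹ * H y) = 0
        ∧ -(ρh * ((1 / lam) * ∫ y in (0:ℝ)..lam, (ρ y)⁻¹ * H y)) = 0
        ∧ ρh⁻¹ * ((1 / lam) * ∫ y in (0:ℝ)..lam, ρ y * D y) = 0 := by
  have hK : ∀ y, K y = c ^ 2 * ρ y := fun y => (div_eq_iff (hρpos y).ne').mp (hspeed y)
  have hh : Kh = c ^ 2 * ρh := by
    simp only [hKh, hρh, hK, mul_inv, intervalIntegral.integral_const_mul, inv_inv]
    ring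
  have hratio : ∀ y, Kh / K y = ρh / ρ y := fun y => by
    rw [hh, hK, mul_div_mul_left _ _ (pow_ne_zero 2 hc.ne')]
  refine ⟨hratio, fun C _ _ A H D hA hH hD => ?_⟩
  have hA0 := hA.eq_zero hlam fun y => by simp [hratio]
  have hH0 := hH.eq_zero hlam fun y => by simp [hA0]
  have hD0 := hD.eq_zero hlam fun y => by simp [hratio, hA0]
  exact ⟨hA0, hH0, hD0, by simp [hH0], by simp [hH0], by simp [hD0]⟩
end

section
/- For the layered medium with constant impedance, i.e., K_A ρ_A = K_B ρ_B, the normal dispersive homogenization coefficients vanish: with B = ⟦K⁻¹K_h⟧, C = ⟦ρ ρ_m⁻¹⟧, E = ⟦K⁻¹K_h C − B⟧, F = ⟦ρ ρ_m⁻¹ B − C⟧, one has K_h⟨K⁻¹F⟩ = 0, ρ_h⟨ρ⁻¹F⟩ = 0 and ρ_m⁻¹⟨ρE⟩ = 0 (that is, α₁ = β₁ = γ₁ = 0). In particular, a layered medium with constant impedance exhibits no effective dispersion for normally propagating waves at order δ². -/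
open MeasureTheory

open Set

/-- Integral of a function against a weight that is constant on each half of a period. -/
theorem intervalIntegral_two_layer_mul {lam wA wB : ℝ} {w F : ℝ → ℝ} (hlam : 0 < lam)
    (hA : ∀ y ∈ Ico (0:ℝ) (lam / 2), w y = wA) (hB : ∀ y ∈ Ico (lam / 2) lam, w y = wB)
    (hF : Continuous F) :
    IntervalIntegrable (fun y => w y * F y) volume 0 lam ∧
    ∫ y in (0:ℝ)..lam, w y * F y
      = wA * (∫ y in (0:ℝ)..(lam / 2), F y) + wB * ∫ y in (lam / 2)..lam, F y := by
  have eqA : EqOn (fun y => wA * F y) (fun y => w y * F y) (uIoo 0 (lam / 2)) := by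
    intro y hy
    rw [uIoo_of_le (by linarith)] at hy
    simp only [hA y ⟨hy.1.le, hy.2⟩]
  have eqB : EqOn (fun y => wB * F y) (fun y => w y * F y) (uIoo (lam / 2) lam) := by
    intro y hy
    rw [uIoo_of_le (by linarith)] at hy
    simp only [hB y ⟨hy.1.le, hy.2⟩]
  have iA : IntervalIntegrable (fun y => w y * F y) volume 0 (lam / 2) :=
    ((continuous_const.mul hF).intervalIntegrable _ _).congr_uIoo eqA
  have iB : IntervalIntegrable (fun y => w y * F y) volume (lam / 2) lam :=
    ((continuous_const.mul hF).intervalIntegrable _ _).congr_uIoo eqB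
  refine ⟨iA.trans iB, ?_⟩
  rw [← intervalIntegral.integral_add_adjacent_intervals iA iB,
    ← intervalIntegral.integral_congr_uIoo eqA, ← intervalIntegral.integral_congr_uIoo eqB,
    intervalIntegral.integral_const_mul, intervalIntegral.integral_const_mul]

theorem IsBracket.integral_eq_zero {lam : ℝ} {a F : ℝ → ℝ} (hlam : 0 < lam)
    (hF : IsBracket lam a F) : ∫ y in (0:ℝ)..lam, F y = 0 :=
  (mul_eq_zero.mp hF.2.2.1).resolve_left (by positivity)

/-- On one period, the bracket depends only on the values of its argument there. -/
theorem IsBracket.eqOn {lam : ℝ} {a b F G : ℝ → ℝ} (hlam : 0 < lam)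
    (hF : IsBracket lam a F) (hG : IsBracket lam b G) (hab : EqOn a b (Ioo 0 lam)) :
    EqOn F G (Icc 0 lam) := by
  have mean : ∫ s in (0:ℝ)..lam, a s = ∫ s in (0:ℝ)..lam, b s :=
    intervalIntegral.integral_congr_uIoo (by rwa [uIoo_of_le hlam.le])
  have diff : ∀ y ∈ Icc 0 lam, F y = G y + (F 0 - G 0) := by
    intro y hy
    have h : ∫ ξ in (0:ℝ)..y, (a ξ - (1 / lam) * ∫ s in (0:ℝ)..lam, a s)
        = ∫ ξ in (0:ℝ)..y, (b ξ - (1 / lam) * ∫ s in (0:ℝ)..lam, b s) := by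
      refine intervalIntegral.integral_congr_uIoo fun ξ hξ => ?_
      rw [uIoo_of_le hy.1] at hξ
      simp only [mean, hab ⟨hξ.1, hξ.2.trans_le hy.2⟩]
    rw [hF.2.2.2 y, hG.2.2.2 y, h]
    ring
  have const : ∫ y in (0:ℝ)..lam, F y = ∫ y in (0:ℝ)..lam, (G y + (F 0 - G 0)) :=
    intervalIntegral.integral_congr fun y hy => diff y (by rwa [uIcc_of_le hlam.le] at hy)
  rw [intervalIntegral.integral_add (hG.1.intervalIntegrable _ _) (by simp),
    hF.integral_eq_zero hlam, hG.integral_eq_zero hlam, intervalIntegral.integral_const,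
    smul_eq_mul, sub_zero, zero_add] at const
  have h0 : F 0 - G 0 = 0 := (mul_eq_zero.mp const.symm).resolve_left hlam.ne'
  intro y hy
  rw [diff y hy, h0, add_zero]

/-- If `a` is odd, up to an additive constant, about the midpoint of the period, then its
bracket is even about that midpoint. -/
theorem IsBracket.reflect {lam m : ℝ} {a F : ℝ → ℝ} (hlam : 0 < lam)
    (hF : IsBracket lam a F) (ha : IntervalIntegrable a volume 0 lam)
    (hodd : ∀ y ∈ Ioo 0 (lam / 2), a y + a (lam - y) = 2 * m) :
    ∀ y ∈ Icc 0 lam, F (lam - y) = F y := by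
  have odd : ∀ᵐ y : ℝ, y ∈ Ioc 0 lam → a (lam - y) = 2 * m - a y := by
    filter_upwards [Measure.ae_ne volume (lam / 2), Measure.ae_ne volume lam] with y h1 h2 hy
    rcases lt_or_gt_of_ne h1 with h | h
    · linarith [hodd y ⟨hy.1, h⟩]
    · have := hodd (lam - y) ⟨by linarith [lt_of_le_of_ne hy.2 h2], by linarith⟩
      rw [sub_sub_cancel] at this
      linarith
  have mean : (1 / lam) * ∫ s in (0:ℝ)..lam, a s = m := by
    have h1 : ∫ s in (0:ℝ)..lam, a (lam - s) = ∫ s in (0:ℝ)..lam, a s := by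
      rw [intervalIntegral.integral_comp_sub_left, sub_self, sub_zero]
    have h2 : ∫ s in (0:ℝ)..lam, a (lam - s) = ∫ s in (0:ℝ)..lam, (2 * m - a s) :=
      intervalIntegral.integral_congr_ae (by rwa [uIoc_of_le hlam.le])
    rw [intervalIntegral.integral_sub (by simp) ha, intervalIntegral.integral_const,
      smul_eq_mul, sub_zero] at h2
    have h3 : ∫ s in (0:ℝ)..lam, a s = lam * m := by linarith
    rw [h3]
    field_simp
  have repr := hF.2.2.2
  rw [mean] at repr
  intro y hy
  have hsub : IntervalIntegrable (fun ξ => a ξ - m) volume 0 lam := ha.sub (by simp)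
  have mem : lam - y ∈ uIcc 0 lam := by
    rw [uIcc_of_le hlam.le]
    exact ⟨by linarith [hy.2], by linarith [hy.1]⟩
  have split := intervalIntegral.integral_add_adjacent_intervals
    (hsub.mono_set (uIcc_subset_uIcc_left mem)) (hsub.mono_set (uIcc_subset_uIcc_right mem))
  have tail : ∫ ξ in (lam - y)..lam, (a ξ - m) = -∫ ξ in (0:ℝ)..y, (a ξ - m) := by
    have h := intervalIntegral.integral_comp_sub_left (a := 0) (b := y) (fun ξ => a ξ - m) lam
    rw [sub_zero] at h
    rw [← h, ← intervalIntegral.integral_neg]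
    refine intervalIntegral.integral_congr_ae ?_
    filter_upwards [odd] with ξ hξ hmem
    rw [uIoc_of_le hy.1] at hmem
    rw [hξ ⟨hmem.1, hmem.2.trans hy.2⟩]
    ring
  have period : F lam = F 0 := by simpa using hF.2.1 0
  linarith [repr (lam - y), repr y, repr lam]

/-- A bracket that is even about the midpoint of the period has zero mean on each half. -/
theorem IsBracket.integral_half_eq_zero {lam : ℝ} {a F : ℝ → ℝ} (hlam : 0 < lam)
    (hF : IsBracket lam a F) (heven : ∀ y ∈ Icc 0 lam, F (lam - y) = F y) :
    ∫ y in (0:ℝ)..(lam / 2), F y = 0 ∧ ∫ y in (lam / 2)..lam, F y = 0 := by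
  have split := intervalIntegral.integral_add_adjacent_intervals
    (hF.1.intervalIntegrable (μ := volume) 0 (lam / 2))
    (hF.1.intervalIntegrable (μ := volume) (lam / 2) lam)
  rw [hF.integral_eq_zero hlam] at split
  have halves : ∫ y in (0:ℝ)..(lam / 2), F y = ∫ y in (lam / 2)..lam, F y := by
    have h := intervalIntegral.integral_comp_sub_left (a := 0) (b := lam / 2) F lam
    rw [sub_zero, sub_half] at h
    rw [← h]
    refine intervalIntegral.integral_congr fun y hy => ?_
    rw [uIcc_of_le (by linarith)] at hy
    exact (heven y ⟨hy.1, by linarith [hy.2]⟩).symm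
  constructor <;> linarith

/-- For the layered medium with constant impedance (`K_A ρ_A = K_B ρ_B`),
the normal dispersive homogenization coefficients vanish: with `B = ⟦K⁻¹K_h⟧`,
`C = ⟦ρ ρ_m⁻¹⟧`, `E = ⟦K⁻¹K_h C − B⟧`, `F = ⟦ρ ρ_m⁻¹ B − C⟧`, one has
`α₁ = K_h⟨K⁻¹F⟩ = 0`, `β₁`-numerator `ρ_h⟨ρ⁻¹F⟩ = 0` and `γ₁ = ρ_m⁻¹⟨ρE⟩ = 0`.
A constant-impedance layered medium has no effective normal dispersion at order `δ²`. -/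
theorem constant_impedance_no_normal_dispersion
    (lam KA KB ρA ρB : ℝ)
    (hlam : 0 < lam) (hKA : 0 < KA) (hKB : 0 < KB) (hρA : 0 < ρA) (hρB : 0 < ρB)
    (hZ : KA * ρA = KB * ρB)
    (K ρ : ℝ → ℝ)
    (hK_per : ∀ y, K (y + lam) = K y) (hρ_per : ∀ y, ρ (y + lam) = ρ y)
    (hKvalA : ∀ y ∈ Set.Ico (0:ℝ) (lam / 2), K y = KA)
    (hKvalB : ∀ y ∈ Set.Ico (lam / 2) lam, K y = KB)
    (hρvalA : ∀ y ∈ Set.Ico (0:ℝ) (lam / 2), ρ y = ρA)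
    (hρvalB : ∀ y ∈ Set.Ico (lam / 2) lam, ρ y = ρB)
    (Km ρm Kh ρh : ℝ)
    (hKm : Km = (KA + KB) / 2) (hρm : ρm = (ρA + ρB) / 2)
    (hKh : Kh = ((1 / lam) * ∫ y in (0:ℝ)..lam, (K y)⁻¹)⁻¹)
    (hρh : ρh = ((1 / lam) * ∫ y in (0:ℝ)..lam, (ρ y)⁻¹)⁻¹)
    (B C E F : ℝ → ℝ)
    (hB : IsBracket lam (fun yh => Kh / K yh) B)
    (hC : IsBracket lam (fun yh => ρ yh / ρm) C)
    (hE : IsBracket lam (fun yh => Kh / K yh * C yh - B yh) E)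
    (hF : IsBracket lam (fun yh => ρ yh / ρm * B yh - C yh) F) :
    Kh * ((1 / lam) * ∫ y in (0:ℝ)..lam, (K y)⁻¹ * F y) = 0
    ∧ ρh * ((1 / lam) * ∫ y in (0:ℝ)..lam, (ρ y)⁻¹ * F y) = 0
    ∧ ρm⁻¹ * ((1 / lam) * ∫ y in (0:ℝ)..lam, ρ y * E y) = 0 := by
  have hρm0 : ρm ≠ 0 := by rw [hρm]; positivity
  have hKh' : Kh = KA * ρA / ρm := by
    have h := (intervalIntegral_two_layer_mul (w := fun y => (K y)⁻¹) (F := fun _ => 1) hlam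
      (fun y hy => congrArg _ (hKvalA y hy)) (fun y hy => congrArg _ (hKvalB y hy))
      continuous_const).2
    simp only [mul_one, intervalIntegral.integral_const, smul_eq_mul] at h
    have hKB' : KB = KA * ρA / ρB := by rw [hZ]; field_simp
    have hmean : (1 / lam) * ∫ y in (0:ℝ)..lam, (K y)⁻¹ = ρm / (KA * ρA) := by
      rw [h, hρm, hKB']
      field_simp
      ring
    rw [hKh, hmean, inv_div]
  have coeff : ∀ y ∈ Ioo 0 lam, Kh / K y = ρ y / ρm := by
    intro y hy
    rcases lt_or_ge y (lam / 2) with h | h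
    · rw [hKvalA y ⟨hy.1.le, h⟩, hρvalA y ⟨hy.1.le, h⟩, hKh']
      field_simp
    · rw [hKvalB y ⟨h, hy.2⟩, hρvalB y ⟨h, hy.2⟩, hKh', hZ]
      field_simp
  have hBC : EqOn B C (Icc 0 lam) := hB.eqOn hlam hC coeff
  have hEF : EqOn E F (Icc 0 lam) := by
    refine hE.eqOn hlam hF fun y hy => ?_
    simp only [coeff y hy, hBC (Ioo_subset_Icc_self hy)]
  have valA : ∀ y ∈ Ioo 0 (lam / 2), ρ y = ρA := fun y hy => hρvalA y ⟨hy.1.le, hy.2⟩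
  have valB : ∀ y ∈ Ioo 0 (lam / 2), ρ (lam - y) = ρB := fun y hy =>
    hρvalB _ ⟨by linarith [hy.2], by linarith [hy.1]⟩
  have layerA : ∀ y ∈ Ico (0:ℝ) (lam / 2), ρ y / ρm = ρA / ρm := fun y hy => by
    rw [hρvalA y hy]
  have layerB : ∀ y ∈ Ico (lam / 2) lam, ρ y / ρm = ρB / ρm := fun y hy => by
    rw [hρvalB y hy]
  have hC_even : ∀ y ∈ Icc 0 lam, C (lam - y) = C y := by
    refine hC.reflect (m := 1) hlam ?_ fun y hy => ?_
    · simpa using (intervalIntegral_two_layer_mul (F := fun _ => 1) hlam layerA layerB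
        continuous_const).1
    · simp only [valA y hy, valB y hy]
      field_simp
      linarith
  have hF_even : ∀ y ∈ Icc 0 lam, F (lam - y) = F y := by
    refine hF.reflect (m := 0) hlam ?_ fun y hy => ?_
    · exact (intervalIntegral_two_layer_mul hlam layerA layerB hB.1).1.sub
        (hC.1.intervalIntegrable _ _)
    · have hy' : y ∈ Icc 0 lam := ⟨hy.1.le, by linarith [hy.2]⟩
      have hy'' : lam - y ∈ Icc 0 lam := ⟨by linarith [hy'.2], by linarith [hy'.1]⟩
      simp only [valA y hy, valB y hy, hBC hy', hBC hy'', hC_even y hy']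
      field_simp
      rw [hρm]
      ring
  obtain ⟨hF1, hF2⟩ := hF.integral_half_eq_zero hlam hF_even
  have weighted : ∀ (w : ℝ → ℝ) (wA wB : ℝ), (∀ y ∈ Ico (0:ℝ) (lam / 2), w y = wA) →
      (∀ y ∈ Ico (lam / 2) lam, w y = wB) → ∫ y in (0:ℝ)..lam, w y * F y = 0 := by
    intro w wA wB hA hB
    rw [(intervalIntegral_two_layer_mul hlam hA hB hF.1).2, hF1, hF2, mul_zero, mul_zero,
      add_zero]
  have hρE : ∫ y in (0:ℝ)..lam, ρ y * E y = ∫ y in (0:ℝ)..lam, ρ y * F y :=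
    intervalIntegral.integral_congr fun y hy => by
      rw [uIcc_of_le hlam.le] at hy
      simp only [hEF hy]
  rw [hρE, weighted ρ ρA ρB hρvalA hρvalB,
    weighted (fun y => (K y)⁻¹) KA⁻¹ KB⁻¹ (fun y hy => congrArg _ (hKvalA y hy))
      (fun y hy => congrArg _ (hKvalB y hy)),
    weighted (fun y => (ρ y)⁻¹) ρA⁻¹ ρB⁻¹ (fun y hy => congrArg _ (hρvalA y hy))
      (fun y hy => congrArg _ (hρvalB y hy))]
  simp
end

section
/- For the layered medium, with the fast-variable functions A = ⟦K⁻¹K_h − ρ⁻¹ρ_h⟧, B = ⟦K⁻¹K_h⟧, C = ⟦ρ ρ_m⁻¹⟧, the averages appearing in the first-order homogenized correction all vanish: ⟨K⁻¹C⟩ = 0, ⟨ρ⁻¹C⟩ = 0, ⟨ρA⟩ = 0 and ⟨ρB⟩ = 0. Consequently the first-order homogenized correction to the effective acoustic system is identically zero for this medium. -/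
open MeasureTheory

/-- `IsTwoLayer lam g gA gB` says that on the period `[0, lam)` the function `g` takes the value
`gA` on the first half and `gB` on the second half. -/
def IsTwoLayer (lam : ℝ) (g : ℝ → ℝ) (gA gB : ℝ) : Prop :=
  (∀ y ∈ Set.Ico (0 : ℝ) (lam / 2), g y = gA) ∧ ∀ y ∈ Set.Ico (lam / 2) lam, g y = gB

namespace IsTwoLayer

variable {lam gA gB : ℝ} {g : ℝ → ℝ}

theorem eqOn_left (hg : IsTwoLayer lam g gA gB) {y : ℝ} (hy₀ : 0 ≤ y) (hy : y ≤ lam / 2) :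
    Set.EqOn g (fun _ => gA) (Set.uIoo 0 y) := by
  intro x hx
  rw [Set.uIoo_of_le hy₀] at hx
  exact hg.1 x ⟨hx.1.le, hx.2.trans_le hy⟩

theorem eqOn_right (hg : IsTwoLayer lam g gA gB) {y : ℝ} (hy₀ : lam / 2 ≤ y) (hy : y ≤ lam) :
    Set.EqOn g (fun _ => gB) (Set.uIoo (lam / 2) y) := by
  intro x hx
  rw [Set.uIoo_of_le hy₀] at hx
  exact hg.2 x ⟨hx.1.le, hx.2.trans_le hy⟩

theorem comp (hg : IsTwoLayer lam g gA gB) (φ : ℝ → ℝ) :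
    IsTwoLayer lam (fun y => φ (g y)) (φ gA) (φ gB) :=
  ⟨fun y hy => congrArg φ (hg.1 y hy), fun y hy => congrArg φ (hg.2 y hy)⟩

theorem sub {f : ℝ → ℝ} {fA fB : ℝ} (hf : IsTwoLayer lam f fA fB) (hg : IsTwoLayer lam g gA gB) :
    IsTwoLayer lam (fun y => f y - g y) (fA - gA) (fB - gB) :=
  ⟨fun y hy => congrArg₂ (· - ·) (hf.1 y hy) (hg.1 y hy),
    fun y hy => congrArg₂ (· - ·) (hf.2 y hy) (hg.2 y hy)⟩

theorem integral_left (hg : IsTwoLayer lam g gA gB) {y : ℝ} (hy₀ : 0 ≤ y) (hy : y ≤ lam / 2) :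
    ∫ x in (0 : ℝ)..y, g x = y * gA := by
  rw [intervalIntegral.integral_congr_uIoo (hg.eqOn_left hy₀ hy)]
  simp

theorem integral_mul (hg : IsTwoLayer lam g gA gB) (hlam : 0 < lam) {F : ℝ → ℝ}
    (hF : Continuous F) {y : ℝ} (hy₀ : lam / 2 ≤ y) (hy : y ≤ lam) :
    ∫ x in (0 : ℝ)..y, g x * F x =
      gA * (∫ x in (0 : ℝ)..(lam / 2), F x) + gB * ∫ x in (lam / 2)..y, F x := by
  have hl : Set.EqOn (fun x => g x * F x) (fun x => gA * F x) (Set.uIoo 0 (lam / 2)) :=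
    fun x hx => congrArg (· * F x) (hg.eqOn_left (by positivity) le_rfl hx)
  have hr : Set.EqOn (fun x => g x * F x) (fun x => gB * F x) (Set.uIoo (lam / 2) y) :=
    fun x hx => congrArg (· * F x) (hg.eqOn_right hy₀ hy hx)
  have il : IntervalIntegrable (fun x => g x * F x) volume 0 (lam / 2) :=
    ((continuous_const.mul hF).intervalIntegrable _ _).congr_uIoo hl.symm
  have ir : IntervalIntegrable (fun x => g x * F x) volume (lam / 2) y :=
    ((continuous_const.mul hF).intervalIntegrable _ _).congr_uIoo hr.symm
  rw [← intervalIntegral.integral_add_adjacent_intervals il ir,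
    intervalIntegral.integral_congr_uIoo hl, intervalIntegral.integral_congr_uIoo hr,
    intervalIntegral.integral_const_mul, intervalIntegral.integral_const_mul]

theorem integral_right (hg : IsTwoLayer lam g gA gB) (hlam : 0 < lam) {y : ℝ}
    (hy₀ : lam / 2 ≤ y) (hy : y ≤ lam) :
    ∫ x in (0 : ℝ)..y, g x = lam / 2 * gA + (y - lam / 2) * gB := by
  have h := hg.integral_mul hlam (F := fun _ => 1) continuous_const hy₀ hy
  simp only [mul_one, intervalIntegral.integral_const, smul_eq_mul] at h
  rw [h]
  ring

end IsTwoLayer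

theorem integral_affine (p q a b : ℝ) :
    ∫ y in p..q, (a + b * y) = a * (q - p) + b * ((q ^ 2 - p ^ 2) / 2) := by
  rw [intervalIntegral.integral_add (by simp) (Continuous.intervalIntegrable (by fun_prop) _ _),
    intervalIntegral.integral_const_mul, integral_id, intervalIntegral.integral_const, smul_eq_mul]
  ring

/-- The bracket of a two-layer function integrates to zero over each of the two layers. -/
theorem IsBracket.integral_layers_eq_zero {lam aA aB : ℝ} {a F : ℝ → ℝ} (hF : IsBracket lam a F)
    (ha : IsTwoLayer lam a aA aB) (hlam : 0 < lam) :
    ∫ y in (0 : ℝ)..(lam / 2), F y = 0 ∧ ∫ y in (lam / 2)..lam, F y = 0 := by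
  obtain ⟨hcont, -, hmean, hF⟩ := hF
  have hm : (1 / lam) * ∫ s in (0 : ℝ)..lam, a s = (aA + aB) / 2 := by
    rw [ha.integral_right hlam (by linarith) le_rfl]
    field_simp
    ring
  have hd := ha.comp (· - (aA + aB) / 2)
  simp only [hm] at hF
  have hl : ∫ y in (0 : ℝ)..(lam / 2), F y =
      ∫ y in (0 : ℝ)..(lam / 2), (F 0 + (aA - aB) / 2 * y) := by
    refine intervalIntegral.integral_congr fun y hy => ?_
    rw [Set.uIcc_of_le (by positivity)] at hy
    rw [hF y, hd.integral_left hy.1 hy.2]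
    ring
  have hr : ∫ y in (lam / 2)..lam, F y =
      ∫ y in (lam / 2)..lam, (F 0 + lam * (aA - aB) / 2 + (aB - aA) / 2 * y) := by
    refine intervalIntegral.integral_congr fun y hy => ?_
    rw [Set.uIcc_of_le (by linarith)] at hy
    rw [hF y, hd.integral_right hlam hy.1 hy.2]
    ring
  have hlr : ∫ y in (0 : ℝ)..(lam / 2), F y = ∫ y in (lam / 2)..lam, F y := by
    rw [hl, hr, integral_affine, integral_affine]
    ring
  have hsum : (∫ y in (0 : ℝ)..(lam / 2), F y) + ∫ y in (lam / 2)..lam, F y = 0 := by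
    rw [intervalIntegral.integral_add_adjacent_intervals (hcont.intervalIntegrable _ _)
      (hcont.intervalIntegrable _ _)]
    exact (mul_eq_zero.mp hmean).resolve_left (by positivity)
  constructor <;> linarith

/-- A two-layer weight is orthogonal to the bracket of any two-layer function. -/
theorem IsBracket.mean_mul_eq_zero {lam aA aB gA gB : ℝ} {a F g : ℝ → ℝ}
    (hF : IsBracket lam a F) (ha : IsTwoLayer lam a aA aB) (hg : IsTwoLayer lam g gA gB)
    (hlam : 0 < lam) : (1 / lam) * (∫ y in (0 : ℝ)..lam, g y * F y) = 0 := by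
  obtain ⟨hl, hr⟩ := hF.integral_layers_eq_zero ha hlam
  rw [hg.integral_mul hlam hF.1 (by linarith) le_rfl, hl, hr]
  simp

/-- For the layered medium, with the fast-variable functions
`A = ⟦K⁻¹K_h − ρ⁻¹ρ_h⟧`, `B = ⟦K⁻¹K_h⟧`, `C = ⟦ρ ρ_m⁻¹⟧`, the averages appearing in the
first-order homogenized correction all vanish:
`⟨K⁻¹C⟩ = 0`, `⟨ρ⁻¹C⟩ = 0`, `⟨ρA⟩ = 0`, `⟨ρB⟩ = 0`; hence the first-order homogenized
correction to the effective acoustic system is identically zero for this medium. -/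
theorem layered_first_order_correction_averages_vanish
    (lam KA KB ρA ρB : ℝ)
    (hlam : 0 < lam) (hKA : 0 < KA) (hKB : 0 < KB) (hρA : 0 < ρA) (hρB : 0 < ρB)
    (K ρ : ℝ → ℝ)
    (hK_per : ∀ y, K (y + lam) = K y) (hρ_per : ∀ y, ρ (y + lam) = ρ y)
    (hKvalA : ∀ y ∈ Set.Ico (0:ℝ) (lam / 2), K y = KA)
    (hKvalB : ∀ y ∈ Set.Ico (lam / 2) lam, K y = KB)
    (hρvalA : ∀ y ∈ Set.Ico (0:ℝ) (lam / 2), ρ y = ρA)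
    (hρvalB : ∀ y ∈ Set.Ico (lam / 2) lam, ρ y = ρB)
    (Km ρm Kh ρh : ℝ)
    (hKm : Km = (KA + KB) / 2) (hρm : ρm = (ρA + ρB) / 2)
    (hKh : Kh = ((1 / lam) * ∫ y in (0:ℝ)..lam, (K y)⁻¹)⁻¹)
    (hρh : ρh = ((1 / lam) * ∫ y in (0:ℝ)..lam, (ρ y)⁻¹)⁻¹)
    (A B C : ℝ → ℝ)
    (hA : IsBracket lam (fun yh => Kh / K yh - ρh / ρ yh) A)
    (hB : IsBracket lam (fun yh => Kh / K yh) B)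
    (hC : IsBracket lam (fun yh => ρ yh / ρm) C) :
    (1 / lam) * (∫ y in (0:ℝ)..lam, (K y)⁻¹ * C y) = 0
    ∧ (1 / lam) * (∫ y in (0:ℝ)..lam, (ρ y)⁻¹ * C y) = 0
    ∧ (1 / lam) * (∫ y in (0:ℝ)..lam, ρ y * A y) = 0
    ∧ (1 / lam) * (∫ y in (0:ℝ)..lam, ρ y * B y) = 0 := by
  have hK : IsTwoLayer lam K KA KB := ⟨hKvalA, hKvalB⟩
  have hρ : IsTwoLayer lam ρ ρA ρB := ⟨hρvalA, hρvalB⟩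
  have hKinv := hK.comp (Kh / ·)
  have hC_data := hρ.comp (· / ρm)
  exact ⟨hC.mean_mul_eq_zero hC_data (hK.comp (·⁻¹)) hlam,
    hC.mean_mul_eq_zero hC_data (hρ.comp (·⁻¹)) hlam,
    hA.mean_mul_eq_zero (hKinv.sub (hρ.comp (ρh / ·))) hρ hlam,
    hB.mean_mul_eq_zero hKinv hρ hlam⟩
end

section
/- Let K_A, K_B, ρ_A, ρ_B, λ > 0 and set K_m = (K_A+K_B)/2, ρ_m = (ρ_A+ρ_B)/2, ρ_h = 2ρ_Aρ_B/(ρ_A+ρ_B), Z_i² = K_iρ_i, c_i² = K_i/ρ_i. Define the leading dispersive coefficients by their closed forms for the layered medium: α₁ = −(K_A−K_B)(Z_A²−Z_B²)λ²/(192K_m²ρ_m), γ₁ = −(ρ_A−ρ_B)(Z_A²−Z_B²)λ²/(192K_mρ_m²), α₂ = −(K_A−K_B)(c_A²−c_B²)ρ_mλ²/(192K_m²), β₂ = (ρ_A−ρ_B)(c_A²−c_B²)λ²/(192K_m). Then the combined dispersive coefficients governing normal and transverse propagation satisfy α₁ + γ₁ = −(Z_A² − Z_B²)² λ² / (192 K_m²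 ρ_m²) and α₂ + β₂ = −ρ_m ρ_h (c_A² − c_B²)² λ² / (192 K_m²). In particular α₁ + γ₁ is proportional to the square of the impedance contrast and α₂ + β₂ to the square of the sound-speed contrast, each vanishing exactly when the respective contrast is zero. -/
/-- For the two-layer medium, the combined dispersive coefficients satisfy
`α₁ + γ₁ = −(Z_A² − Z_B²)² λ²/(192 K_m² ρ_m²)` and
`α₂ + β₂ = −ρ_m ρ_h (c_A² − c_B²)² λ²/(192 K_m²)`; in particular `α₁ + γ₁` is proportional
to the squared impedance contrast and `α₂ + β₂` to the squared sound-speed contrast, each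
vanishing exactly when the respective contrast is zero. -/
theorem combined_dispersive_coefficients
    (lam KA KB ρA ρB : ℝ)
    (hlam : 0 < lam) (hKA : 0 < KA) (hKB : 0 < KB) (hρA : 0 < ρA) (hρB : 0 < ρB)
    (Km ρm ρh ZA2 ZB2 cA2 cB2 : ℝ)
    (hKm : Km = (KA + KB) / 2) (hρm : ρm = (ρA + ρB) / 2)
    (hρh : ρh = 2 * ρA * ρB / (ρA + ρB))
    (hZA2 : ZA2 = KA * ρA) (hZB2 : ZB2 = KB * ρB)
    (hcA2 : cA2 = KA / ρA) (hcB2 : cB2 = KB / ρB)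
    (α₁ γ₁ α₂ β₂ : ℝ)
    (hα₁ : α₁ = -((KA - KB) * (ZA2 - ZB2) * lam ^ 2) / (192 * Km ^ 2 * ρm))
    (hγ₁ : γ₁ = -((ρA - ρB) * (ZA2 - ZB2) * lam ^ 2) / (192 * Km * ρm ^ 2))
    (hα₂ : α₂ = -((KA - KB) * (cA2 - cB2) * ρm * lam ^ 2) / (192 * Km ^ 2))
    (hβ₂ : β₂ = (ρA - ρB) * (cA2 - cB2) * lam ^ 2 / (192 * Km)) :
    α₁ + γ₁ = -((ZA2 - ZB2) ^ 2 * lam ^ 2) / (192 * Km ^ 2 * ρm ^ 2)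
    ∧ α₂ + β₂ = -(ρm * ρh * (cA2 - cB2) ^ 2 * lam ^ 2) / (192 * Km ^ 2)
    ∧ (α₁ + γ₁ = 0 ↔ ZA2 = ZB2)
    ∧ (α₂ + β₂ = 0 ↔ cA2 = cB2) := by
  have hKm0 : Km ≠ 0 := by rw [hKm]; positivity
  have hρm0 : ρm ≠ 0 := by rw [hρm]; positivity
  have hmh : ρm * ρh = ρA * ρB := by rw [hρm, hρh]; field_simp
  have hZ : ZA2 - ZB2 = (KA - KB) * ρm + (ρA - ρB) * Km := by
    rw [hZA2, hZB2, hKm, hρm]; ring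
  have hc : ρA * ρB * (cA2 - cB2) = (KA - KB) * ρm - (ρA - ρB) * Km := by
    rw [hcA2, hcB2, hKm, hρm]; field_simp; ring
  have hnormal :
      α₁ + γ₁ = -((ZA2 - ZB2) ^ 2 * lam ^ 2) / (192 * Km ^ 2 * ρm ^ 2) := by
    rw [hα₁, hγ₁, hZ]; field_simp; ring
  have htransverse :
      α₂ + β₂ = -(ρm * ρh * (cA2 - cB2) ^ 2 * lam ^ 2) / (192 * Km ^ 2) := by
    have hsq : ρm * ρh * (cA2 - cB2) ^ 2
        = ((KA - KB) * ρm - (ρA - ρB) * Km) * (cA2 - cB2) := by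
      rw [hmh, ← hc]; ring
    rw [hα₂, hβ₂, hsq]; field_simp; ring
  refine ⟨hnormal, htransverse, ?_, ?_⟩
  · rw [hnormal]
    simp [hKm0, hρm0, hlam.ne', sub_eq_zero]
  · rw [htransverse, hmh]
    simp [hKm0, hρA.ne', hρB.ne', hlam.ne', sub_eq_zero]
end
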